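/- Let 1 ≤ ℓ < k, suppose 1/n ≪ 1/C ≪ β ≪ η ≪ 1/k and 0 < ε ≤ ℓ/(3t₁), where t₁ = ⌈ℓ/(k−ℓ)⌉ and t₃ = 3t₁(k−ℓ) − ℓ. Let H′ and G be two n-vertex k-graphs on the same vertex set V such that for every ℓ-set S ⊆ V either deg_{H′}(S) = 0 or deg_{H′}(S) ≥ η·n^{k−ℓ}, and G = 𝔾^{(k)}(n,p) with p ≥ n^{−(k−ℓ)−ε} if ℓ ≥ 2 and p ≥ C·n^{−(k−1)} if ℓ = 1. Then for any set W ⊆ V with |W| ≤ ηn/3, a.a.s. H′ ∪ G contains a collection 𝒞 of pairwise disjoint t₃-sets such that V(𝒞) ∩ W = ∅, |𝒞| ≤ βn, and for every two disjoint ordered ℓ-sets S, S′ in V with deg_{H′}(S), deg_{H′}(S′) ≥ η·n^{k−ℓ}, at least 3β³n members of 𝒞 connect S and S′ in H′ ∪ G. -/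

import Mathlib

open Finset
open scoped Classical

/-- All `k`-subsets of `Fin n` (the possible edges of a `k`-graph on `n` vertices). -/
def kSets (n k : ℕ) : Finset (Finset (Fin n)) := Finset.univ.powersetCard k

/-- The probability that the binomial random `k`-graph `G^{(k)}(n,p)` (each `k`-set is an
edge independently with probability `p`) has an edge set satisfying the property `A`. -/
noncomputable def gProb (n k : ℕ) (p : ℝ) (A : Finset (Finset (Fin n)) → Prop) : ℝ :=
  ∑ E ∈ (kSets n k).powerset.filter (fun E => A E),
    p ^ E.card * (1 - p) ^ ((kSets n k).card - E.card)

/-- Expectation of a random variable `f` of the random `k`-graph `G^{(k)}(n,p)`. -/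
noncomputable def gExpect (n k : ℕ) (p : ℝ) (f : Finset (Finset (Fin n)) → ℝ) : ℝ :=
  ∑ E ∈ (kSets n k).powerset,
    p ^ E.card * (1 - p) ^ ((kSets n k).card - E.card) * f E

/-- The degree of a vertex set `S` in the `k`-graph with edge set `E`: the number of edges
containing `S` (equivalently, the number of `(k-|S|)`-sets `T` with `S ∪ T ∈ E`). -/
def degOf {n : ℕ} (E : Finset (Finset (Fin n))) (S : Finset (Fin n)) : ℕ :=
  (E.filter (fun e => S ⊆ e)).card

/-- The minimum vertex degree (minimum 1-degree) of a `k`-graph. -/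
noncomputable def minVertexDeg {n : ℕ} (E : Finset (Finset (Fin n))) : ℕ :=
  sInf {d : ℕ | ∃ v : Fin n, degOf E {v} = d}

/-- The index set of the `i`-th edge of the path `P_{a,x}`:
`{x + i*d, x + i*d + 1, …, x + i*d + k - 1}` (here `d = k - ℓ`). -/
def edgeIdx (k d x i : ℕ) : Finset ℕ := (Finset.range k).image (fun j => x + i * d + j)

/-- The ordered `b`-tuple `w` spans a labeled copy of `P_{a,x}` (the `k`-uniform `ℓ`-path
with `a` edges, preceded and followed by `x` isolated vertices) in the edge set `E`. -/
def SpansPax {n : ℕ} (k ℓ a x : ℕ) (E : Finset (Finset (Fin n))) {b : ℕ}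
    (w : Fin b → Fin n) : Prop :=
  Function.Injective w ∧
  ∀ i < a,
    ((Finset.univ.filter (fun m : Fin b => (m : ℕ) ∈ edgeIdx k (k - ℓ) x i)).image w) ∈ E

/-- The ordered tuple `w` spans a labeled copy of the `ℓ`-path `P_a` of length `a` in `E`. -/
def SpansPath {n : ℕ} (k ℓ a : ℕ) (E : Finset (Finset (Fin n))) {b : ℕ}
    (w : Fin b → Fin n) : Prop :=
  SpansPax k ℓ a 0 E w

/-- The first `ℓ`-end of the ordered tuple `w` (its first `ℓ` vertices, as a set). -/
def firstEnd {n b : ℕ} (ℓ : ℕ) (w : Fin b → Fin n) : Finset (Fin n) :=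
  (Finset.univ.filter (fun m : Fin b => (m : ℕ) < ℓ)).image w

/-- The last `ℓ`-end of the ordered tuple `w` (its last `ℓ` vertices, as a set). -/
def lastEnd {n b : ℕ} (ℓ : ℕ) (w : Fin b → Fin n) : Finset (Fin n) :=
  (Finset.univ.filter (fun m : Fin b => b - ℓ ≤ (m : ℕ))).image w

/-- The `k`-graph with edge set `E` on vertex set `Fin n` contains a Hamiltonian `ℓ`-cycle:
there is a cyclic ordering of all `n` vertices such that each of the `n/(k-ℓ)` edges
consists of `k` consecutive vertices, consecutive edges overlapping in `ℓ` vertices. -/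
def IsHamCycle (n k ℓ : ℕ) (E : Finset (Finset (Fin n))) : Prop :=
  ∃ f : ZMod n → Fin n, Function.Bijective f ∧
    ∀ i < n / (k - ℓ),
      ((Finset.range k).image (fun j => f (((i * (k - ℓ) + j : ℕ) : ZMod n)))) ∈ E

/-- The `ℓ`-shadow of a `k`-graph: all `ℓ`-sets contained in some edge. -/
def shadowL {n : ℕ} (ℓ : ℕ) (E : Finset (Finset (Fin n))) : Finset (Finset (Fin n)) :=
  (Finset.univ.powersetCard ℓ).filter (fun S => ∃ e ∈ E, S ⊆ e)

/-- The list `v` of vertices spans a copy of the `ℓ`-path `P_a` of length `a` in `E`. -/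
def ListSpans {n : ℕ} (k ℓ a : ℕ) (E : Finset (Finset (Fin n))) (v : List (Fin n)) : Prop :=
  v.Nodup ∧ v.length = a * (k - ℓ) + ℓ ∧
    ∀ i < a, ((v.drop (i * (k - ℓ))).take k).toFinset ∈ E

/-- `Φ_F(n,p) = min { n^{v_H} p^{e_H} : H ⊆ F, e_H > 0 }`, where the subgraph `H` is given
by a nonempty edge set `E' ⊆ F` together with a vertex set `W` containing all its edges. -/
noncomputable def Phi {V : Type*} (n : ℕ) (p : ℝ) (F : Finset (Finset V)) : ℝ :=
  sInf {r : ℝ | ∃ (W : Finset V) (E' : Finset (Finset V)),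
    E' ⊆ F ∧ E'.Nonempty ∧ (∀ e ∈ E', e ⊆ W) ∧ r = (n : ℝ) ^ W.card * p ^ E'.card}

/-- The ordered tuple `w` spans a labeled copy of the `k`-graph `F` (given by its edge set
`Fe` on vertex set `Fin s`) in the edge set `E`. -/
def SpansCopy {n s : ℕ} (Fe : Finset (Finset (Fin s))) (E : Finset (Finset (Fin n)))
    (w : Fin s → Fin n) : Prop :=
  ∀ e ∈ Fe, e.image w ∈ E

/-- Concatenation of three ordered tuples. -/
def concat3 {n p q r : ℕ} (A : Fin p → Fin n) (C : Fin q → Fin n) (B : Fin r → Fin n)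
    (m : Fin (p + q + r)) : Fin n :=
  if h : (m : ℕ) < p then A ⟨(m : ℕ), h⟩
  else if h2 : (m : ℕ) < p + q then C ⟨(m : ℕ) - p, by omega⟩
  else B ⟨(m : ℕ) - (p + q), by have := m.isLt; omega⟩

/-- `w`, spanning an `ℓ`-path of length `a`, is a `W`-absorber in `E`: it avoids `W`, and
its vertex set together with `W` spans an `ℓ`-path (of length `a+1` when `|W| = k - ℓ`)
with the same two `ℓ`-ends. -/
def IsAbsorber {n : ℕ} (k ℓ a : ℕ) (E : Finset (Finset (Fin n))) {b : ℕ}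
    (w : Fin b → Fin n) (W : Finset (Fin n)) : Prop :=
  (∀ m, w m ∉ W) ∧
  ∃ w' : Fin (b + W.card) → Fin n, SpansPath k ℓ (a + 1) E w' ∧
    Finset.image w' Finset.univ = Finset.image w Finset.univ ∪ W ∧
    firstEnd ℓ w' = firstEnd ℓ w ∧ lastEnd ℓ w' = lastEnd ℓ w

/-! Write `t = ⌈ℓ / (k - ℓ)⌉`. A tuple `c` connects `A` and `B` when the `3t` edges of the path
along `A c B` are present. For tuples of large degree, the first and the last `t` of these edges
can be chosen greedily in the dense hypergraph `H`, so a constant proportion of all tuples `c`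
lack only the middle `t` edges, which have to come from the random hypergraph. These middle edges
all contain one common vertex, the anchor.

The connectors are found one at a time. Each round fixes the image of the anchor and of the other
vertices outside the middle edges, and a random colouring of the remaining vertices; it then
exposes only the random edges at the anchor's image. At the (lowered) edge probability the
overlaps between candidates are rare, so by Bonferroni each candidate is with comparable
probability the only one to appear, and then it is taken. Discounting a pair `(A, B)` by a factor
`1 / 2` whenever a connector serves it, the expected total weight of all pairs shrinks by a factor
`1 - κ` per round, and `βn` rounds beat the at most `n ^ (2ℓ)` pairs. -/

section RandomSubset

/-- The expectation of `f` over the random subset of `K` that contains each element of `K`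
independently with probability `p`. -/
noncomputable def subsetExpect {α : Type*} (p : ℝ) (K : Finset α) (f : Finset α → ℝ) : ℝ :=
  ∑ E ∈ K.powerset, p ^ #E * (1 - p) ^ (#K - #E) * f E

variable {α : Type*} {p : ℝ} {K : Finset α} {f g : Finset α → ℝ}

lemma subsetExpect_empty : subsetExpect p ∅ f = f ∅ := by simp [subsetExpect]

lemma subsetExpect_congr (h : ∀ E ⊆ K, f E = g E) : subsetExpect p K f = subsetExpect p K g :=
  sum_congr rfl fun E hE => by rw [h E (mem_powerset.1 hE)]

lemma subsetExpect_mono (hp : p ∈ Set.Icc 0 1) (h : ∀ E ⊆ K, f E ≤ g E) :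
    subsetExpect p K f ≤ subsetExpect p K g :=
  sum_le_sum fun E hE => mul_le_mul_of_nonneg_left (h E (mem_powerset.1 hE)) <|
    mul_nonneg (pow_nonneg hp.1 _) (pow_nonneg (sub_nonneg.2 hp.2) _)

lemma subsetExpect_const (p : ℝ) (K : Finset α) (r : ℝ) : subsetExpect p K (fun _ => r) = r := by
  simp [subsetExpect, ← sum_mul, sum_pow_mul_eq_add_pow]

lemma subsetExpect_const_mul (r : ℝ) :
    subsetExpect p K (fun E => r * f E) = r * subsetExpect p K f := by
  simp only [subsetExpect, mul_sum, mul_left_comm]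

lemma subsetExpect_sub :
    subsetExpect p K (fun E => f E - g E) = subsetExpect p K f - subsetExpect p K g := by
  simp only [subsetExpect, mul_sub, sum_sub_distrib]

lemma subsetExpect_sum {ι : Type*} (s : Finset ι) (f : ι → Finset α → ℝ) :
    subsetExpect p K (fun E => ∑ i ∈ s, f i E) = ∑ i ∈ s, subsetExpect p K (f i) := by
  simp only [subsetExpect, mul_sum]
  exact sum_comm

lemma subsetExpect_insert [DecidableEq α] {a : α} (ha : a ∉ K) :
    subsetExpect p (insert a K) f =
      (1 - p) * subsetExpect p K f + p * subsetExpect p K fun E => f (insert a E) := by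
  simp only [subsetExpect, sum_powerset_insert ha, mul_sum, card_insert_of_notMem ha]
  congr 1 <;> refine sum_congr rfl fun E hE => ?_
  · rw [Nat.sub_add_comm (card_le_card (mem_powerset.1 hE)), pow_succ]
    ring
  · rw [card_insert_of_notMem fun h => ha (mem_powerset.1 hE h), Nat.add_sub_add_right, pow_succ]
    ring

lemma subsetExpect_union [DecidableEq α] {L : Finset α} (h : Disjoint K L) :
    subsetExpect p (K ∪ L) f =
      subsetExpect p L fun E₂ => subsetExpect p K fun E₁ => f (E₁ ∪ E₂) := by
  induction L using Finset.induction_on generalizing f with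
  | empty => simp [subsetExpect_empty]
  | insert a L ha ih =>
    obtain ⟨haK, hKL⟩ := disjoint_insert_right.1 h
    rw [union_insert, subsetExpect_insert (by simp [haK, ha]), subsetExpect_insert ha,
      ih hKL, ih hKL]
    simp only [union_insert]

lemma subsetExpect_indicator_superset [DecidableEq α] {D : Finset α} (h : D ⊆ K) :
    subsetExpect p K (fun E => if D ⊆ E then 1 else 0) = p ^ #D := by
  have hiff : ∀ E₂ ⊆ D, ∀ E₁ ⊆ K \ D, (D ⊆ E₁ ∪ E₂ ↔ E₂ = D) := fun E₂ h₂ E₁ h₁ =>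
    ⟨fun hD => h₂.antisymm fun x hx => (mem_union.1 (hD hx)).resolve_left
      fun hx₁ => (mem_sdiff.1 (h₁ hx₁)).2 hx, fun hD => hD ▸ subset_union_right⟩
  calc subsetExpect p K (fun E => if D ⊆ E then 1 else 0)
      = subsetExpect p D fun E₂ => subsetExpect p (K \ D) fun E₁ =>
          if D ⊆ E₁ ∪ E₂ then 1 else 0 := by
        rw [← subsetExpect_union (f := fun E => if D ⊆ E then 1 else 0) sdiff_disjoint,
          sdiff_union_of_subset h]
    _ = subsetExpect p D fun E₂ => if E₂ = D then 1 else 0 :=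
        subsetExpect_congr fun E₂ h₂ => by
          rw [← subsetExpect_const p (K \ D) (if E₂ = D then 1 else 0)]
          exact subsetExpect_congr fun E₁ h₁ => by simp only [hiff E₂ h₂ E₁ h₁]
    _ = p ^ #D := by simp [subsetExpect]

lemma subsetExpect_anti_left (hp : p ∈ Set.Icc 0 1) {K' : Finset α} (h : K' ⊆ K)
    (hf : Antitone f) : subsetExpect p K f ≤ subsetExpect p K' f := by
  classical
  rw [← union_sdiff_of_subset h, subsetExpect_union disjoint_sdiff,
    ← subsetExpect_const p (K \ K') (subsetExpect p K' f)]
  exact subsetExpect_mono hp fun E₂ _ => subsetExpect_mono hp fun E₁ _ => hf subset_union_left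

lemma subsetExpect_mono_prob {q : ℝ} (hp : 0 ≤ p) (hpq : p ≤ q) (hq : q ≤ 1) (hf : Monotone f) :
    subsetExpect p K f ≤ subsetExpect q K f := by
  classical
  induction K using Finset.induction_on generalizing f with
  | empty => simp [subsetExpect_empty]
  | insert a K ha ih =>
    have hout : subsetExpect p K f ≤ subsetExpect q K f := ih hf
    have hin : subsetExpect p K (fun E => f (insert a E)) ≤
        subsetExpect q K fun E => f (insert a E) :=
      ih fun E E' h => hf (insert_subset_insert a h)
    have hadd : subsetExpect q K f ≤ subsetExpect q K fun E => f (insert a E) :=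
      subsetExpect_mono ⟨hp.trans hpq, hq⟩ fun E _ => hf (subset_insert a E)
    rw [subsetExpect_insert ha, subsetExpect_insert ha]
    nlinarith [mul_le_mul_of_nonneg_left hout (sub_nonneg.2 (hpq.trans hq)),
      mul_le_mul_of_nonneg_left hin hp, mul_nonneg (sub_nonneg.2 hpq) (sub_nonneg.2 hadd)]

end RandomSubset

section RandomHypergraph

variable {n k : ℕ} {p : ℝ} {A B : Finset (Finset (Fin n)) → Prop}

lemma gProb_eq_subsetExpect :
    gProb n k p A = subsetExpect p (kSets n k) fun E => if A E then 1 else 0 := by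
  simp only [gProb, subsetExpect, sum_filter, mul_ite, mul_one, mul_zero]

lemma subsetExpect_le_gProb (hp : p ∈ Set.Icc 0 1) {f : Finset (Finset (Fin n)) → ℝ}
    (h1 : ∀ E, f E ≤ 1) (h0 : ∀ E, ¬A E → f E ≤ 0) :
    subsetExpect p (kSets n k) f ≤ gProb n k p A := by
  rw [gProb_eq_subsetExpect]
  refine subsetExpect_mono hp fun E _ => ?_
  split_ifs with hE
  exacts [h1 E, h0 E hE]

lemma gProb_mono (hp : p ∈ Set.Icc 0 1) (h : ∀ E, A E → B E) : gProb n k p A ≤ gProb n k p B :=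
  sum_le_sum_of_subset_of_nonneg (monotone_filter_right _ fun E _ => h E) fun _ _ _ =>
    mul_nonneg (pow_nonneg hp.1 _) (pow_nonneg (sub_nonneg.2 hp.2) _)

lemma gProb_mono_prob {q : ℝ} (hp : 0 ≤ p) (hpq : p ≤ q) (hq : q ≤ 1) (hA : Monotone A) :
    gProb n k p A ≤ gProb n k q A := by
  rw [gProb_eq_subsetExpect, gProb_eq_subsetExpect]
  refine subsetExpect_mono_prob hp hpq hq fun E E' h => ?_
  have := hA h
  by_cases hE : A E <;> by_cases hE' : A E' <;> simp_all

end RandomHypergraph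

section Selection

variable {ι α : Type*} [DecidableEq ι] [DecidableEq α] {p : ℝ} {K : Finset α}

lemma indicator_sub_sum_le_indicator_filter_eq_singleton (s : Finset ι) (Q : ι → Prop)
    [DecidablePred Q] {c : ι} (hc : c ∈ s) :
    (if Q c then 1 else 0 : ℝ) - ∑ c' ∈ s.erase c, (if Q c ∧ Q c' then 1 else 0 : ℝ) ≤
      if s.filter Q = {c} then 1 else 0 := by
  have hterm : ∀ c' ∈ s.erase c, (0 : ℝ) ≤ if Q c ∧ Q c' then 1 else 0 :=
    fun c' _ => by split_ifs <;> norm_num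
  have hsum := sum_nonneg hterm
  by_cases hQ : Q c
  · by_cases hex : ∃ c' ∈ s.erase c, Q c'
    · obtain ⟨c', hc', hQ'⟩ := hex
      have hle := single_le_sum hterm hc'
      split_ifs at hle ⊢ <;> grind
    · have honly : s.filter Q = {c} := by ext c'; grind
      rw [if_pos honly, if_pos hQ]
      linarith
  · rw [if_neg hQ]
    split_ifs <;> linarith

/-- `sel E` is the candidate contained in `E` when there is exactly one: the pairs of candidates
that appear together cost at most half of the probability that a given one appears. -/
lemma exists_selector (hp : p ∈ Set.Icc 0 1) (cand : Finset ι) (copy : ι → Finset α)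
    (hcopy : ∀ c ∈ cand, copy c ⊆ K)
    (hoverlap : ∀ c ∈ cand, ∑ c' ∈ cand.erase c, p ^ #(copy c' \ copy c) ≤ 1 / 2) :
    ∃ sel : Finset α → Option ι,
      (∀ E c, sel E = some c → c ∈ cand ∧ copy c ⊆ E) ∧
      ∀ c ∈ cand,
        p ^ #(copy c) / 2 ≤ subsetExpect p K fun E => if sel E = some c then 1 else 0 := by
  have hex : ∀ E, ∃ o : Option ι, ∀ c, o = some c ↔ {c' ∈ cand | copy c' ⊆ E} = {c} := fun E => by
    by_cases h : ∃ c, {c' ∈ cand | copy c' ⊆ E} = {c}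
    · obtain ⟨c, hc⟩ := h
      exact ⟨some c, fun c' => by simp [hc]⟩
    · exact ⟨none, fun c => by simpa using fun hc => h ⟨c, hc⟩⟩
  choose sel hsel using hex
  refine ⟨sel, fun E c h => ?_, fun c hc => ?_⟩
  · exact mem_filter.1 (((hsel E c).1 h).symm ▸ mem_singleton_self c)
  have hpair : ∀ c' ∈ cand.erase c,
      subsetExpect p K (fun E => if copy c ⊆ E ∧ copy c' ⊆ E then 1 else 0) =
        p ^ #(copy c) * p ^ #(copy c' \ copy c) := fun c' hc' => by
    simp only [← union_subset_iff]
    rw [subsetExpect_indicator_superset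
      (union_subset (hcopy c hc) (hcopy c' (mem_of_mem_erase hc'))), ← pow_add,
      add_comm, card_sdiff_add_card, union_comm]
  calc p ^ #(copy c) / 2
      ≤ p ^ #(copy c) - ∑ c' ∈ cand.erase c, p ^ #(copy c) * p ^ #(copy c' \ copy c) := by
        rw [← mul_sum]
        nlinarith [hoverlap c hc, pow_nonneg hp.1 #(copy c)]
    _ = subsetExpect p K fun E => (if copy c ⊆ E then 1 else 0) -
          ∑ c' ∈ cand.erase c, if copy c ⊆ E ∧ copy c' ⊆ E then 1 else 0 := by
        rw [subsetExpect_sub, subsetExpect_sum, sum_congr rfl hpair,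
          subsetExpect_indicator_superset (hcopy c hc)]
    _ ≤ subsetExpect p K fun E => if sel E = some c then 1 else 0 :=
        subsetExpect_mono hp fun E _ => by
          simp only [hsel]
          exact indicator_sub_sum_le_indicator_filter_eq_singleton cand (copy · ⊆ E) hc

end Selection

section Counting

variable {P V : Type*} [Fintype P] [DecidableEq P] [Fintype V] [DecidableEq V]

lemma card_filter_forall_mem_eq (c : P → V) (s : Finset P) :
    #{c' : P → V | ∀ q ∈ s, c' q = c q} = Fintype.card V ^ (Fintype.card P - #s) := by
  have hpi : ({c' : P → V | ∀ q ∈ s, c' q = c q} : Finset (P → V)) =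
      Fintype.piFinset fun q => if q ∈ s then {c q} else univ := by
    ext c'
    simp only [mem_filter_univ, Fintype.mem_piFinset]
    exact forall_congr' fun q => by split_ifs with h <;> simp [h]
  rw [hpi, Fintype.card_piFinset, ← prod_subset (subset_univ sᶜ) fun q _ hq => by simp_all]
  rw [prod_congr rfl fun q hq => by rw [if_neg (mem_compl.1 hq)], prod_const, card_compl, card_univ]

lemma card_filter_leftInverse_mul {c : P → V} (hc : Function.Injective c) :
    #{χ : V → P | Function.LeftInverse χ c} * Fintype.card P ^ Fintype.card P =
      Fintype.card P ^ Fintype.card V := by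
  cases isEmpty_or_nonempty P
  · simp [Function.LeftInverse]
  have hiff : ∀ χ : V → P, Function.LeftInverse χ c ↔
      ∀ v ∈ univ.image c, χ v = Function.invFun c v := fun χ => by
    simp [Function.LeftInverse, Function.leftInverse_invFun hc _]
  simp only [hiff, card_filter_forall_mem_eq, card_image_of_injective _ hc, card_univ]
  rw [← pow_add, Nat.sub_add_cancel (Fintype.card_le_of_injective c hc)]

end Counting

/-- A `k`-uniform hypergraph on the vertex set `P` with edges indexed by `J`, together with a set
of root vertices whose images are prescribed when copies of the hypergraph are looked for. One
root vertex, the anchor, lies in every edge, so that all edges of a copy are exposed when the star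
of a single vertex is. -/
structure RootedPattern (P J : Type*) (k : ℕ) where
  edge : J → Finset P
  edge_injective : Function.Injective edge
  card_edge : ∀ x, #(edge x) = k
  root : Finset P
  anchor : P
  anchor_mem_root : anchor ∈ root
  anchor_mem_edge : ∀ x, anchor ∈ edge x
  mem_root_or_edge : ∀ q, q ∈ root ∨ ∃ x, q ∈ edge x

namespace RootedPattern

variable {P J V : Type*} {k : ℕ} (F : RootedPattern P J k)

section Copies

variable [DecidableEq V]

/-- The edges of the copy of `F` whose vertices are placed by `c`. -/
def copyEdges [Fintype J] (c : P → V) : Finset (Finset V) := univ.image fun x => (F.edge x).image c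

variable {F} {c c' : P → V}

lemma card_copyEdges [Fintype J] (hc : Function.Injective c) : #(F.copyEdges c) = Fintype.card J :=
  card_image_of_injective _ ((image_injective hc).comp F.edge_injective)

lemma image_edge_eq_image_edge {χ : V → P} (hc : Function.LeftInverse χ c)
    (hc' : Function.LeftInverse χ c') {x y : J}
    (h : (F.edge x).image c = (F.edge y).image c') :
    x = y ∧ ∀ q ∈ F.edge x, c q = c' q := by
  constructor
  · simpa [image_image, hc.comp_eq_id, hc'.comp_eq_id, F.edge_injective.eq_iff] using
      congrArg (image χ) h
  · intro q hq
    obtain ⟨q', -, hq'⟩ := mem_image.1 (h ▸ mem_image_of_mem c hq)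
    rw [← hq', ← hc q, ← hq', hc' q']

/-- The indices of the edges that are placed on the same vertex set by `c` and by `c'`. -/
noncomputable def sharedEdges [Fintype J] (F : RootedPattern P J k) (c c' : P → V) : Finset J :=
  {x | (F.edge x).image c = (F.edge x).image c'}

lemma card_copyEdges_sdiff [Fintype J] {χ : V → P} (hc : Function.LeftInverse χ c)
    (hc' : Function.LeftInverse χ c') :
    #(F.copyEdges c' \ F.copyEdges c) = Fintype.card J - #(F.sharedEdges c c') := by
  have himage : F.copyEdges c' \ F.copyEdges c =
      (F.sharedEdges c c')ᶜ.image fun x => (F.edge x).image c' := by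
    ext e
    simp only [copyEdges, sharedEdges, mem_sdiff, mem_image, mem_univ, true_and, mem_compl,
      mem_filter]
    constructor
    · rintro ⟨⟨x, rfl⟩, hx⟩
      exact ⟨x, fun h => hx ⟨x, h⟩, rfl⟩
    · rintro ⟨x, hx, rfl⟩
      refine ⟨⟨x, rfl⟩, fun ⟨y, hy⟩ => hx ?_⟩
      obtain ⟨rfl, -⟩ := image_edge_eq_image_edge hc hc' hy
      exact hy
  rw [himage, ← card_compl]
  exact card_image_of_injective _ ((image_injective hc'.injective).comp F.edge_injective)

variable [Fintype V]

/-- The `k`-sets avoiding `Z` that contain the prescribed image of the anchor. -/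
def anchorStar (F : RootedPattern P J k) (Z : Finset V) (a : F.root → V) : Finset (Finset V) :=
  {e ∈ Zᶜ.powersetCard k | a ⟨F.anchor, F.anchor_mem_root⟩ ∈ e}

lemma powersetCard_compl_eq_union_anchorStar (F : RootedPattern P J k) (Z : Finset V)
    (a : F.root → V) : Zᶜ.powersetCard k =
      (insert (a ⟨F.anchor, F.anchor_mem_root⟩) Z)ᶜ.powersetCard k ∪ F.anchorStar Z a := by
  ext e
  simp only [anchorStar, mem_union, mem_filter, mem_powersetCard, subset_compl_iff_disjoint_right,
    disjoint_insert_right]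
  tauto

lemma disjoint_powersetCard_anchorStar (F : RootedPattern P J k) (Z : Finset V)
    (a : F.root → V) :
    Disjoint ((insert (a ⟨F.anchor, F.anchor_mem_root⟩) Z)ᶜ.powersetCard k) (F.anchorStar Z a) :=
  disjoint_left.2 fun _ he he' =>
    mem_compl.1 ((mem_powersetCard.1 he).1 (mem_filter.1 he').2) (mem_insert_self _ _)

variable [Fintype P] [DecidableEq P]

/-- The placements of `F` that avoid `Z`, send the roots where `a` prescribes, and colour each
vertex of the copy by its preimage under `χ`. The colouring makes the copies partite, so that two
of them can only share an edge in the same position. -/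
noncomputable def candidates (F : RootedPattern P J k) (Z : Finset V) (a : F.root → V)
    (χ : V → P) : Finset (P → V) :=
  {c | (∀ q, c q ∉ Z) ∧ F.root.restrict c = a ∧ Function.LeftInverse χ c}

variable {Z : Finset V} {a : F.root → V} {χ : V → P}

lemma mem_candidates : c ∈ F.candidates Z a χ ↔
    (∀ q, c q ∉ Z) ∧ F.root.restrict c = a ∧ Function.LeftInverse χ c := mem_filter_univ _

lemma apply_anchor_of_mem_candidates (hc : c ∈ F.candidates Z a χ) :
    c F.anchor = a ⟨F.anchor, F.anchor_mem_root⟩ :=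
  congrFun (mem_candidates.1 hc).2.1 ⟨F.anchor, F.anchor_mem_root⟩

lemma sum_card_inter_candidates_mul (F : RootedPattern P J k) (Z : Finset V)
    {S : Finset (P → V)} (hS : ∀ c ∈ S, Function.Injective c) :
    (∑ ω : (F.root → V) × (V → P), #(S ∩ F.candidates Z ω.1 ω.2)) *
        Fintype.card P ^ Fintype.card P =
      #{c ∈ S | ∀ q, c q ∉ Z} * Fintype.card P ^ Fintype.card V := by
  have hcard : ∀ ω : (F.root → V) × (V → P), #(S ∩ F.candidates Z ω.1 ω.2) =
      ∑ c ∈ S with ∀ q, c q ∉ Z,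
        if F.root.restrict c = ω.1 ∧ Function.LeftInverse ω.2 c then 1 else 0 := fun ω => by
    rw [← card_filter, filter_filter, candidates, ← filter_mem_eq_inter]
    simp
  have hcolor : ∀ c : P → V, (∑ ω : (F.root → V) × (V → P),
      if F.root.restrict c = ω.1 ∧ Function.LeftInverse ω.2 c then 1 else 0) =
      #{χ : V → P | Function.LeftInverse χ c} := fun c => by
    simp [Fintype.sum_prod_type, ite_and]
  simp only [hcard]
  rw [sum_comm, sum_congr rfl fun c _ => hcolor c, sum_mul,
    sum_congr rfl fun c hc => card_filter_leftInverse_mul (hS c (mem_filter.1 hc).1),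
    sum_const, smul_eq_mul]

variable [Fintype J]

lemma eq_on_root_union_sharedEdges (hc : c ∈ F.candidates Z a χ) (hc' : c' ∈ F.candidates Z a χ)
    {q : P} (hq : q ∈ F.root ∪ (F.sharedEdges c c').biUnion F.edge) : c' q = c q := by
  obtain ⟨-, hroot, hχ⟩ := mem_candidates.1 hc
  obtain ⟨-, hroot', hχ'⟩ := mem_candidates.1 hc'
  rcases mem_union.1 hq with hq | hq
  · exact congrFun (hroot'.trans hroot.symm) ⟨q, hq⟩
  · obtain ⟨x, hx, hqx⟩ := mem_biUnion.1 hq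
    exact ((image_edge_eq_image_edge hχ hχ' (mem_filter.1 hx).2).2 q hqx).symm

lemma sharedEdges_ne_univ (hc : c ∈ F.candidates Z a χ)
    (hc' : c' ∈ (F.candidates Z a χ).erase c) : F.sharedEdges c c' ≠ univ := fun h => by
  obtain ⟨hne, hc'⟩ := mem_erase.1 hc'
  refine hne (funext fun q => eq_on_root_union_sharedEdges hc hc' ?_)
  rw [h]
  simpa using F.mem_root_or_edge q

/-- A bound for the expected number of further copies of `F` with the same roots as a given copy,
conditioned on the given copy, when edges are kept with probability `p` on `n` vertices. A term
counts the copies that share exactly the edges in `I` with the given one. -/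
noncomputable def overlapWeight [DecidableEq J] (F : RootedPattern P J k) (n : ℕ) (p : ℝ) : ℝ :=
  ∑ I ∈ (univ : Finset (Finset J)).erase univ,
    (n : ℝ) ^ (Fintype.card P - #(F.root ∪ I.biUnion F.edge)) * p ^ (Fintype.card J - #I)

lemma sum_erase_pow_card_sdiff_le [DecidableEq J] {p : ℝ} (hp : 0 ≤ p)
    (hc : c ∈ F.candidates Z a χ) :
    ∑ c' ∈ (F.candidates Z a χ).erase c, p ^ #(F.copyEdges c' \ F.copyEdges c) ≤
      F.overlapWeight (Fintype.card V) p := by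
  have hmaps : ∀ c' ∈ (F.candidates Z a χ).erase c,
      F.sharedEdges c c' ∈ (univ : Finset (Finset J)).erase univ := fun c' hc' =>
    mem_erase.2 ⟨sharedEdges_ne_univ hc hc', mem_univ _⟩
  rw [← sum_fiberwise_of_maps_to hmaps]
  refine sum_le_sum fun I _ => ?_
  have hsub : {c' ∈ (F.candidates Z a χ).erase c | F.sharedEdges c c' = I} ⊆
      ({c' | ∀ q ∈ F.root ∪ I.biUnion F.edge, c' q = c q} : Finset (P → V)) := fun c' hc' => by
    obtain ⟨hmem, rfl⟩ := mem_filter.1 hc'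
    exact (mem_filter_univ _).2 fun q =>
      eq_on_root_union_sharedEdges hc (mem_of_mem_erase hmem)
  have hterm : ∀ c' ∈ {c' ∈ (F.candidates Z a χ).erase c | F.sharedEdges c c' = I},
      p ^ #(F.copyEdges c' \ F.copyEdges c) = p ^ (Fintype.card J - #I) := fun c' hc' => by
    obtain ⟨hmem, rfl⟩ := mem_filter.1 hc'
    rw [card_copyEdges_sdiff (mem_candidates.1 hc).2.2
      (mem_candidates.1 (mem_of_mem_erase hmem)).2.2]
  rw [sum_congr rfl hterm, sum_const, nsmul_eq_mul]
  refine mul_le_mul_of_nonneg_right ?_ (pow_nonneg hp _)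
  exact_mod_cast (card_le_card hsub).trans_eq (card_filter_forall_mem_eq c _)

lemma copyEdges_subset_anchorStar (hc : c ∈ F.candidates Z a χ) :
    F.copyEdges c ⊆ F.anchorStar Z a := fun e he => by
  obtain ⟨x, -, rfl⟩ := mem_image.1 he
  obtain ⟨hZ, -, hχ⟩ := mem_candidates.1 hc
  refine mem_filter.2 ⟨mem_powersetCard.2 ⟨?_, ?_⟩, ?_⟩
  · exact image_subset_iff.2 fun q _ => mem_compl.2 (hZ q)
  · rw [card_image_of_injective _ hχ.injective, F.card_edge]
  · exact apply_anchor_of_mem_candidates hc ▸ mem_image_of_mem c (F.anchor_mem_edge x)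

lemma exists_copy_selector [DecidableEq J] {p : ℝ} (hp : p ∈ Set.Icc 0 1)
    (hF : F.overlapWeight (Fintype.card V) p ≤ 1 / 2) :
    ∃ sel : Finset (Finset V) → Option (P → V),
      (∀ E c, sel E = some c → c ∈ F.candidates Z a χ ∧ F.copyEdges c ⊆ E) ∧
      ∀ c ∈ F.candidates Z a χ, p ^ Fintype.card J / 2 ≤
        subsetExpect p (F.anchorStar Z a) fun E => if sel E = some c then 1 else 0 := by
  obtain ⟨sel, hsel, hprob⟩ := exists_selector hp (F.candidates Z a χ) F.copyEdges
    (fun c => copyEdges_subset_anchorStar)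
    fun c hc => (sum_erase_pow_card_sdiff_le hp.1 hc).trans hF
  refine ⟨sel, hsel, fun c hc => ?_⟩
  rw [← card_copyEdges (mem_candidates.1 hc).2.2.injective]
  exact hprob c hc

end Copies

end RootedPattern

namespace RootedPattern

variable {P J V ι : Type*} {k : ℕ} [DecidableEq V] [Fintype J] {F : RootedPattern P J k}
  {m m' : ℕ} {Z Z' : Finset V} {E E' : Finset (Finset V)} {D : Finset (P → V)} {c : P → V}

/-- `D` consists of at most `m` vertex-disjoint copies of `F` that avoid `Z` and have all their
edges in `E`. -/
structure IsPacking (F : RootedPattern P J k) (m : ℕ) (Z : Finset V) (E : Finset (Finset V))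
    (D : Finset (P → V)) : Prop where
  card_le : #D ≤ m
  injective : ∀ c ∈ D, Function.Injective c
  disjoint : ∀ c ∈ D, ∀ c' ∈ D, c ≠ c' → ∀ q q', c q ≠ c' q'
  avoids : ∀ c ∈ D, ∀ q, c q ∉ Z
  copyEdges_subset : ∀ c ∈ D, F.copyEdges c ⊆ E

lemma IsPacking.empty : F.IsPacking m Z E ∅ := by constructor <;> simp

lemma IsPacking.mono (hD : F.IsPacking m Z E D) (hm : m ≤ m') (hZ : Z' ⊆ Z) (hE : E ⊆ E') :
    F.IsPacking m' Z' E' D where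
  card_le := hD.card_le.trans hm
  injective := hD.injective
  disjoint := hD.disjoint
  avoids c hc q hq := hD.avoids c hc q (hZ hq)
  copyEdges_subset c hc := (hD.copyEdges_subset c hc).trans hE

variable [Fintype P]

lemma IsPacking.insert (hD : F.IsPacking m (Z ∪ univ.image c) E D)
    (hc : Function.Injective c) (hZ : ∀ q, c q ∉ Z) (hE : F.copyEdges c ⊆ E) :
    F.IsPacking (m + 1) Z E (insert c D) where
  card_le := (card_insert_le _ _).trans (Nat.succ_le_succ hD.card_le)
  injective := forall_mem_insert _ _ _ |>.2 ⟨hc, hD.injective⟩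
  disjoint := by
    have hnew : ∀ c' ∈ D, ∀ q q', c' q ≠ c q' := fun c' hc' q q' h =>
      hD.avoids c' hc' q (by simp [h])
    intro c₁ h₁ c₂ h₂ hne q q'
    rcases mem_insert.1 h₁ with rfl | hD₁ <;> rcases mem_insert.1 h₂ with rfl | hD₂
    · exact absurd rfl hne
    · exact (hnew c₂ hD₂ q' q).symm
    · exact hnew c₁ hD₁ q q'
    · exact hD.disjoint c₁ hD₁ c₂ hD₂ hne q q'
  avoids := forall_mem_insert _ _ _ |>.2
    ⟨hZ, fun c' hc' q hq => hD.avoids c' hc' q (mem_union_left _ hq)⟩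
  copyEdges_subset := forall_mem_insert _ _ _ |>.2 ⟨hE, hD.copyEdges_subset⟩

variable [Fintype ι] {A : ι → Finset (P → V)} {w : ι → ℝ}

/-- The weighted number of indices `i`, discounted by a factor `1 / 2` for each member of `D` in
the target set `A i`. If it is small then `D` meets every target set often. -/
noncomputable def potential (A : ι → Finset (P → V)) (w : ι → ℝ) (D : Finset (P → V)) : ℝ :=
  ∑ i, w i * (1 / 2) ^ #(D ∩ A i)

/-- The weights that remain when `c` has been added to a packing. -/
noncomputable def discount (A : ι → Finset (P → V)) (w : ι → ℝ) (c : P → V) (i : ι) : ℝ :=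
  w i * if c ∈ A i then 1 / 2 else 1

lemma potential_insert (hc : c ∉ D) :
    potential A w (insert c D) = potential A (discount A w c) D := by
  refine sum_congr rfl fun i _ => ?_
  unfold discount
  split_ifs with h
  · rw [insert_inter_of_mem h, card_insert_of_notMem fun hD => hc (mem_inter.1 hD).1]
    ring
  · rw [insert_inter_of_notMem h, mul_one]

variable [DecidableEq P] [Fintype V]

/-- The least potential of a packing in `E`. -/
noncomputable def minPotential (F : RootedPattern P J k) (A : ι → Finset (P → V)) (m : ℕ)
    (Z : Finset V) (w : ι → ℝ) (E : Finset (Finset V)) : ℝ :=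
  ({D | F.IsPacking m Z E D} : Finset (Finset (P → V))).inf'
    ⟨∅, (mem_filter_univ _).2 IsPacking.empty⟩ (potential A w)

lemma minPotential_le_potential (hD : F.IsPacking m Z E D) :
    F.minPotential A m Z w E ≤ potential A w D :=
  inf'_le _ ((mem_filter_univ _).2 hD)

variable (F m Z E A w) in
lemma exists_minPotential_eq_potential :
    ∃ D, F.IsPacking m Z E D ∧ F.minPotential A m Z w E = potential A w D := by
  obtain ⟨D, hD, heq⟩ := exists_mem_eq_inf'
    (s := ({D | F.IsPacking m Z E D} : Finset (Finset (P → V))))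
    ⟨∅, (mem_filter_univ _).2 IsPacking.empty⟩ (potential A w)
  exact ⟨D, (mem_filter_univ _).1 hD, heq⟩

lemma minPotential_nonneg (hw : ∀ i, 0 ≤ w i) : 0 ≤ F.minPotential A m Z w E := by
  obtain ⟨D, -, heq⟩ := exists_minPotential_eq_potential F m Z E A w
  exact heq ▸ sum_nonneg fun i _ => mul_nonneg (hw i) (by positivity)

lemma minPotential_mono (hm : m ≤ m') (hZ : Z' ⊆ Z) (hE : E ⊆ E') :
    F.minPotential A m' Z' w E' ≤ F.minPotential A m Z w E := by
  obtain ⟨D, hD, heq⟩ := exists_minPotential_eq_potential F m Z E A w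
  exact heq ▸ minPotential_le_potential (hD.mono hm hZ hE)

lemma minPotential_succ_le (hc : Function.Injective c) (hZ : ∀ q, c q ∉ Z)
    (hE : F.copyEdges c ⊆ E) :
    F.minPotential A (m + 1) Z w E ≤
      F.minPotential A m (Z ∪ univ.image c) (discount A w c) E := by
  obtain ⟨D, hD, heq⟩ := exists_minPotential_eq_potential F m (Z ∪ univ.image c) E A
    (discount A w c)
  have hcD : c ∉ D := fun h => hD.avoids c h F.anchor (by simp)
  rw [heq, ← potential_insert hcD]
  exact minPotential_le_potential (hD.insert hc hZ hE)

variable {p κ r : ℝ} {a : F.root → V} {χ : V → P}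

lemma subsetExpect_minPotential_union_le (hp : p ∈ Set.Icc 0 1) (hw : ∀ i, 0 ≤ w i)
    (ih : ∀ Z', #Z' ≤ #Z + Fintype.card P → ∀ w' : ι → ℝ, (∀ i, 0 ≤ w' i) →
      subsetExpect p (Z'ᶜ.powersetCard k) (F.minPotential A m Z' w') ≤ r * ∑ i, w' i)
    {o : Option (P → V)} (ho : ∀ c, o = some c → c ∈ F.candidates Z a χ ∧ F.copyEdges c ⊆ E) :
    subsetExpect p ((insert (a ⟨F.anchor, F.anchor_mem_root⟩) Z)ᶜ.powersetCard k)
        (fun E₁ => F.minPotential A (m + 1) Z w (E₁ ∪ E)) ≤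
      r * ∑ i, w i * (1 - 1 / 2 *
        ∑ c ∈ A i ∩ F.candidates Z a χ, if o = some c then 1 else 0) := by
  cases o with
  | none =>
    have hcard : #(insert (a ⟨F.anchor, F.anchor_mem_root⟩) Z) ≤ #Z + Fintype.card P :=
      (card_insert_le _ _).trans (Nat.add_le_add_left (Fintype.card_pos_iff.2 ⟨F.anchor⟩) _)
    exact (subsetExpect_mono hp fun E₁ _ => minPotential_mono (Nat.le_succ m)
      (subset_insert _ Z) subset_union_left).trans ((ih _ hcard w hw).trans_eq (by simp))
  | some c =>
    obtain ⟨hc, hcE⟩ := ho c rfl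
    obtain ⟨hcZ, -, hχ⟩ := mem_candidates.1 hc
    have hsub : (Z ∪ univ.image c)ᶜ ⊆ (insert (a ⟨F.anchor, F.anchor_mem_root⟩) Z)ᶜ := by
      rw [compl_subset_compl, ← apply_anchor_of_mem_candidates hc]
      exact insert_subset (by simp) subset_union_left
    have hdiscount : ∀ i, discount A w c i = w i * (1 - 1 / 2 *
        ∑ c' ∈ A i ∩ F.candidates Z a χ, if some c = some c' then 1 else 0) := fun i => by
      simp only [discount, Option.some_inj, sum_ite_eq, mem_inter, hc, and_true]
      split_ifs <;> norm_num
    simp only [← hdiscount]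
    calc _ ≤ subsetExpect p _ (F.minPotential A m (Z ∪ univ.image c) (discount A w c)) :=
          subsetExpect_mono hp fun E₁ _ =>
            (minPotential_succ_le hχ.injective hcZ (hcE.trans subset_union_right)).trans
              (minPotential_mono le_rfl subset_rfl subset_union_left)
      _ ≤ _ := subsetExpect_anti_left hp (powersetCard_mono hsub) fun E E' hE =>
            minPotential_mono le_rfl subset_rfl hE
      _ ≤ _ := ih _ ((card_union_le _ _).trans (by gcongr; exact card_image_le)) _ fun i =>
            mul_nonneg (hw i) (by split_ifs <;> norm_num)

/-- Expose the star of the prescribed anchor, add the selected copy to the packing if there is one,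
and continue on the remaining vertices. -/
lemma subsetExpect_minPotential_succ_le [DecidableEq J] (hp : p ∈ Set.Icc 0 1)
    (hF : F.overlapWeight (Fintype.card V) p ≤ 1 / 2) (hw : ∀ i, 0 ≤ w i) (hr : 0 ≤ r)
    (ih : ∀ Z', #Z' ≤ #Z + Fintype.card P → ∀ w' : ι → ℝ, (∀ i, 0 ≤ w' i) →
      subsetExpect p (Z'ᶜ.powersetCard k) (F.minPotential A m Z' w') ≤ r * ∑ i, w' i)
    (a : F.root → V) (χ : V → P) :
    subsetExpect p (Zᶜ.powersetCard k) (F.minPotential A (m + 1) Z w) ≤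
      r * ∑ i, w i * (1 - p ^ Fintype.card J / 4 * #(A i ∩ F.candidates Z a χ)) := by
  obtain ⟨sel, hsel, hprob⟩ := F.exists_copy_selector (Z := Z) (a := a) (χ := χ) hp hF
  rw [F.powersetCard_compl_eq_union_anchorStar Z a,
    subsetExpect_union (F.disjoint_powersetCard_anchorStar Z a)]
  refine (subsetExpect_mono hp fun E _ =>
    subsetExpect_minPotential_union_le hp hw ih (hsel E)).trans ?_
  simp only [subsetExpect_const_mul, subsetExpect_sum, subsetExpect_sub, subsetExpect_const]
  have hsum : ∀ i, #(A i ∩ F.candidates Z a χ) * (p ^ Fintype.card J / 2) ≤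
      ∑ c ∈ A i ∩ F.candidates Z a χ,
        subsetExpect p (F.anchorStar Z a) fun E => if sel E = some c then 1 else 0 := fun i => by
    rw [← nsmul_eq_mul]
    exact card_nsmul_le_sum _ _ _ fun c hc => hprob c (mem_inter.1 hc).2
  refine mul_le_mul_of_nonneg_left
    (sum_le_sum fun i _ => mul_le_mul_of_nonneg_left ?_ (hw i)) hr
  linarith [hsum i]

/-- Averaging over the images `a` of the roots and the colourings `χ`. -/
lemma exists_sum_mul_one_sub_card_candidates_le [Nonempty V] (hw : ∀ i, 0 ≤ w i)
    (hA : ∀ i, ∀ c ∈ A i, Function.Injective c)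
    (hdense : ∀ i, 4 * (Fintype.card P : ℝ) ^ Fintype.card P *
        (Fintype.card V : ℝ) ^ #F.root * κ ≤ p ^ Fintype.card J * #{c ∈ A i | ∀ q, c q ∉ Z}) :
    ∃ (a : F.root → V) (χ : V → P),
      ∑ i, w i * (1 - p ^ Fintype.card J / 4 * #(A i ∩ F.candidates Z a χ)) ≤
        (1 - κ) * ∑ i, w i := by
  have : Nonempty P := ⟨F.anchor⟩
  have hP : (0 : ℝ) < (Fintype.card P : ℝ) ^ Fintype.card P := by positivity
  have havg : ∀ i, Fintype.card ((F.root → V) × (V → P)) * κ ≤ p ^ Fintype.card J / 4 *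
      ∑ ω : (F.root → V) × (V → P), (#(A i ∩ F.candidates Z ω.1 ω.2) : ℝ) := fun i => by
    have hcount := sum_card_inter_candidates_mul F Z (hA i)
    have hcard : Fintype.card ((F.root → V) × (V → P)) =
        Fintype.card V ^ #F.root * Fintype.card P ^ Fintype.card V := by simp
    rify at hcount hcard
    refine le_of_mul_le_mul_right ?_ hP
    rw [mul_assoc _ (∑ _, _), hcount, hcard]
    linarith [mul_le_mul_of_nonneg_right (hdense i)
      (by positivity : 0 ≤ (Fintype.card P : ℝ) ^ Fintype.card V)]
  have hsum : ∑ ω : (F.root → V) × (V → P),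
      ∑ i, w i * (1 - p ^ Fintype.card J / 4 * #(A i ∩ F.candidates Z ω.1 ω.2)) ≤
      ∑ _ω : (F.root → V) × (V → P), (1 - κ) * ∑ i, w i := by
    rw [sum_comm, sum_const, nsmul_eq_mul, card_univ, ← mul_assoc, mul_sum]
    refine sum_le_sum fun i _ => ?_
    rw [← mul_sum, sum_sub_distrib, ← mul_sum, sum_const, card_univ, nsmul_eq_mul, mul_comm _ (w i)]
    exact mul_le_mul_of_nonneg_left (by linarith [havg i]) (hw i)
  obtain ⟨ω, -, hω⟩ := exists_le_of_sum_le univ_nonempty hsum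
  exact ⟨ω.1, ω.2, hω⟩

theorem subsetExpect_minPotential_le [DecidableEq J] [Nonempty V] (hp : p ∈ Set.Icc 0 1)
    (hF : F.overlapWeight (Fintype.card V) p ≤ 1 / 2)
    (hA : ∀ i, ∀ c ∈ A i, Function.Injective c) (hκ : κ ≤ 1) {M : ℕ}
    (hdense : ∀ i, ∀ Z : Finset V, #Z ≤ M → 4 * (Fintype.card P : ℝ) ^ Fintype.card P *
        (Fintype.card V : ℝ) ^ #F.root * κ ≤ p ^ Fintype.card J * #{c ∈ A i | ∀ q, c q ∉ Z})
    (hw : ∀ i, 0 ≤ w i) (hM : #Z + Fintype.card P * m ≤ M) :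
    subsetExpect p (Zᶜ.powersetCard k) (F.minPotential A m Z w) ≤ (1 - κ) ^ m * ∑ i, w i := by
  induction m generalizing Z w with
  | zero =>
    rw [← subsetExpect_const p (Zᶜ.powersetCard k) ((1 - κ) ^ 0 * ∑ i, w i)]
    exact subsetExpect_mono hp fun E _ =>
      (minPotential_le_potential IsPacking.empty).trans_eq (by simp [potential])
  | succ m ih =>
    obtain ⟨a, χ, haχ⟩ := exists_sum_mul_one_sub_card_candidates_le (F := F) hw hA fun i =>
      hdense i Z ((Nat.le_add_right _ _).trans hM)
    have hr : 0 ≤ (1 - κ) ^ m := pow_nonneg (sub_nonneg.2 hκ) m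
    calc _ ≤ (1 - κ) ^ m *
          ∑ i, w i * (1 - p ^ Fintype.card J / 4 * #(A i ∩ F.candidates Z a χ)) :=
        subsetExpect_minPotential_succ_le hp hF hw hr
          (fun Z' hZ' w' hw' => ih hw' (by linarith [Nat.mul_succ (Fintype.card P) m])) a χ
      _ ≤ (1 - κ) ^ m * ((1 - κ) * ∑ i, w i) := mul_le_mul_of_nonneg_left haχ hr
      _ = _ := by ring

lemma one_sub_two_pow_mul_minPotential_nonpos {T : ℕ}
    (h : ¬∃ D, F.IsPacking m Z E D ∧ ∀ i, T ≤ #(D ∩ A i)) :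
    1 - 2 ^ T * F.minPotential A m Z (fun _ => 1) E ≤ 0 := by
  obtain ⟨D, hD, heq⟩ := exists_minPotential_eq_potential F m Z E A fun _ => 1
  push Not at h
  obtain ⟨i, hi⟩ := h D hD
  have hterm : (1 / 2 : ℝ) ^ T ≤ potential A (fun _ => 1) D :=
    calc (1 / 2 : ℝ) ^ T ≤ (1 / 2) ^ #(D ∩ A i) :=
          pow_le_pow_of_le_one (by norm_num) (by norm_num) hi.le
      _ = 1 * (1 / 2) ^ #(D ∩ A i) := (one_mul _).symm
      _ ≤ potential A (fun _ => 1) D :=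
          single_le_sum (f := fun i => (1 : ℝ) * (1 / 2) ^ #(D ∩ A i))
            (fun i _ => by positivity) (mem_univ i)
  have hone : (2 : ℝ) ^ T * (1 / 2) ^ T = 1 := by rw [← mul_pow]; norm_num
  rw [heq]
  linarith [mul_le_mul_of_nonneg_left hterm (pow_nonneg zero_le_two T : (0 : ℝ) ≤ 2 ^ T)]

theorem le_gProb_exists_isPacking {n : ℕ} [NeZero n] [DecidableEq J] {A : ι → Finset (P → Fin n)}
    {W : Finset (Fin n)} (hp : p ∈ Set.Icc 0 1) (hF : F.overlapWeight n p ≤ 1 / 2)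
    (hA : ∀ i, ∀ c ∈ A i, Function.Injective c) (hκ : κ ≤ 1)
    (hdense : ∀ i, ∀ Z : Finset (Fin n), #Z ≤ #W + Fintype.card P * m →
      4 * (Fintype.card P : ℝ) ^ Fintype.card P * (n : ℝ) ^ #F.root * κ ≤
        p ^ Fintype.card J * #{c ∈ A i | ∀ q, c q ∉ Z}) (T : ℕ) :
    1 - 2 ^ T * ((1 - κ) ^ m * Fintype.card ι) ≤
      gProb n k p fun E => ∃ D, F.IsPacking m W E D ∧ ∀ i, T ≤ #(D ∩ A i) := by
  have hexpect : subsetExpect p (kSets n k) (F.minPotential A m W fun _ => 1) ≤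
      (1 - κ) ^ m * Fintype.card ι :=
    calc _ ≤ subsetExpect p (Wᶜ.powersetCard k) (F.minPotential A m W fun _ => 1) :=
          subsetExpect_anti_left hp (powersetCard_mono (subset_univ _)) fun E E' hE =>
            minPotential_mono le_rfl subset_rfl hE
      _ ≤ (1 - κ) ^ m * ∑ _i : ι, (1 : ℝ) :=
          subsetExpect_minPotential_le hp (by rwa [Fintype.card_fin]) hA hκ
            (by simpa only [Fintype.card_fin] using hdense) (fun _ => zero_le_one) le_rfl
      _ = _ := by simp
  calc _ ≤ 1 - 2 ^ T * subsetExpect p (kSets n k) (F.minPotential A m W fun _ => 1) := by gcongr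
    _ = subsetExpect p (kSets n k) fun E => 1 - 2 ^ T * F.minPotential A m W (fun _ => 1) E := by
        rw [subsetExpect_sub, subsetExpect_const, subsetExpect_const_mul]
    _ ≤ _ := subsetExpect_le_gProb hp
        (fun E => by
          have := minPotential_nonneg (F := F) (A := A) (m := m) (Z := W) (E := E) (w := fun _ => 1)
            fun _ => zero_le_one
          simp only [sub_le_self_iff]
          positivity)
        fun E hE => one_sub_two_pow_mul_minPotential_nonpos hE

end RootedPattern

section MiddlePattern

variable {k ℓ t N n : ℕ}

lemma mem_edgeIdx {d i j : ℕ} : j ∈ edgeIdx k d 0 i ↔ i * d ≤ j ∧ j < i * d + k := by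
  simp only [edgeIdx, mem_image, mem_range, zero_add]
  exact ⟨by rintro ⟨a, ha, rfl⟩; omega, fun h => ⟨j - i * d, by omega, by omega⟩⟩

lemma card_edgeIdx (k d i : ℕ) : #(edgeIdx k d 0 i) = k := by
  rw [edgeIdx, card_image_of_injective _ (add_right_injective _), card_range]

lemma edgeIdx_injective {d : ℕ} (hk : 0 < k) (hd : 0 < d) :
    Function.Injective (edgeIdx k d 0) := by
  have hle : ∀ i i', edgeIdx k d 0 i = edgeIdx k d 0 i' → i' * d ≤ i * d := fun i i' h => by
    have hi : i * d ∈ edgeIdx k d 0 i := mem_edgeIdx.2 (by omega)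
    exact (mem_edgeIdx.1 (h ▸ hi)).1
  exact fun i i' h => Nat.eq_of_mul_eq_mul_right hd (le_antisymm (hle _ _ h.symm) (hle _ _ h))

lemma add_mul_le_card_biUnion_edgeIdx (hlk : ℓ ≤ k) {s : Finset ℕ} (hs : s.Nonempty) :
    ℓ + #s * (k - ℓ) ≤ #(s.biUnion (edgeIdx k (k - ℓ) 0)) := by
  induction s using Finset.induction_on_max with
  | empty => exact absurd hs not_nonempty_empty
  | insert a s hmax ih =>
    rw [card_insert_of_notMem fun ha => lt_irrefl a (hmax a ha), biUnion_insert, add_mul, one_mul]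
    obtain rfl | hs := s.eq_empty_or_nonempty
    · simp [card_edgeIdx, hlk]
    have hold : Disjoint (Ico (a * (k - ℓ) + ℓ) (a * (k - ℓ) + k))
        (s.biUnion (edgeIdx k (k - ℓ) 0)) := by
      refine disjoint_left.2 fun j hj hjs => ?_
      obtain ⟨i, hi, hji⟩ := mem_biUnion.1 hjs
      have := Nat.mul_le_mul_right (k - ℓ) (hmax i hi)
      rw [Nat.succ_mul] at this
      have := (mem_edgeIdx.1 hji).2
      have := (mem_Ico.1 hj).1
      omega
    have hnew : Ico (a * (k - ℓ) + ℓ) (a * (k - ℓ) + k) ⊆ edgeIdx k (k - ℓ) 0 a := fun j hj =>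
      mem_edgeIdx.2 (by have := mem_Ico.1 hj; omega)
    have hcard := card_le_card (union_subset_union_left (t := s.biUnion (edgeIdx k (k - ℓ) 0)) hnew)
    rw [card_union_of_disjoint hold, Nat.card_Ico] at hcard
    have := ih hs
    omega

/-- The positions of the tuple `c` which, in the concatenation of an `ℓ`-tuple, `c` and a further
tuple, become the positions in `s`. -/
def innerPositions (N ℓ : ℕ) (s : Finset ℕ) : Finset (Fin N) := {m | (m : ℕ) + ℓ ∈ s}

lemma mem_innerPositions {s : Finset ℕ} {m : Fin N} :
    m ∈ innerPositions N ℓ s ↔ (m : ℕ) + ℓ ∈ s := by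
  simp [innerPositions]

lemma image_innerPositions {s : Finset ℕ} (hs : s ⊆ Ico ℓ (N + ℓ)) :
    (innerPositions N ℓ s).image (fun m : Fin N => (m : ℕ) + ℓ) = s := by
  ext j
  refine ⟨fun hj => ?_, fun hj => ?_⟩
  · obtain ⟨m, hm, rfl⟩ := mem_image.1 hj
    exact mem_innerPositions.1 hm
  · have hjs := mem_Ico.1 (hs hj)
    have hcancel : j - ℓ + ℓ = j := by omega
    exact mem_image.2 ⟨⟨j - ℓ, by omega⟩, mem_innerPositions.2 (by rwa [hcancel]), hcancel⟩

lemma card_innerPositions {s : Finset ℕ} (hs : s ⊆ Ico ℓ (N + ℓ)) :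
    #(innerPositions N ℓ s) = #s := by
  conv_rhs => rw [← image_innerPositions hs]
  exact (card_image_of_injective _ fun m m' h => Fin.ext (Nat.add_right_cancel h)).symm

lemma image_filter_concat3 {A B : Fin ℓ → Fin n} {c : Fin N → Fin n} {s : Finset ℕ}
    (hs : s ⊆ Ico ℓ (N + ℓ)) :
    ({m : Fin (ℓ + N + ℓ) | (m : ℕ) ∈ s} : Finset _).image (concat3 A c B) =
      (innerPositions N ℓ s).image c := by
  have hmid : ∀ (m : Fin N) (hm : (m : ℕ) + ℓ < ℓ + N + ℓ), concat3 A c B ⟨m + ℓ, hm⟩ = c m :=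
    fun m hm => by
      rw [concat3, dif_neg (by dsimp only; omega), dif_pos (by dsimp only; omega)]
      exact congrArg c (Fin.ext (Nat.add_sub_cancel _ _))
  ext v
  simp only [mem_image, mem_filter, mem_univ, true_and, mem_innerPositions]
  constructor
  · rintro ⟨m, hm, rfl⟩
    have hbounds := mem_Ico.1 (hs hm)
    have hcancel : (m : ℕ) - ℓ + ℓ = m := by omega
    refine ⟨⟨m - ℓ, by omega⟩, by rwa [← hcancel] at hm, ?_⟩
    rw [← hmid _ (by dsimp only; omega)]
    exact congrArg _ (Fin.ext hcancel)
  · rintro ⟨m, hm, rfl⟩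
    exact ⟨⟨m + ℓ, by omega⟩, hm, hmid _ _⟩

/-- `t = ⌈ℓ / (k - ℓ)⌉` and `N = 3t(k - ℓ) - ℓ` for `1 ≤ ℓ < k`, without division or truncated
subtraction from a product: the parameters of a connecting tuple. -/
structure IsConnectorSize (k ℓ t N : ℕ) : Prop where
  one_le : 1 ≤ ℓ
  lt : ℓ < k
  le_mul : ℓ ≤ t * (k - ℓ)
  mul_lt : t * (k - ℓ) < k
  add_eq : N + ℓ = 3 * (t * (k - ℓ))

namespace IsConnectorSize

lemma one_le_length (h : IsConnectorSize k ℓ t N) : 1 ≤ t := by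
  refine Nat.one_le_iff_ne_zero.2 fun ht => ?_
  have hle := h.le_mul
  rw [ht, zero_mul] at hle
  exact absurd (h.one_le.trans hle) (by decide)

lemma add_mul_bounds (h : IsConnectorSize k ℓ t N) (x : Fin t) :
    (t + x) * (k - ℓ) = t * (k - ℓ) + x * (k - ℓ) ∧
      x * (k - ℓ) + (k - ℓ) ≤ t * (k - ℓ) ∧ ℓ + (k - ℓ) = k :=
  ⟨add_mul _ _ _, by simpa [add_mul] using Nat.mul_le_mul_right (k - ℓ) (Nat.succ_le_of_lt x.isLt),
    Nat.add_sub_cancel' h.lt.le⟩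

lemma edgeIdx_subset (h : IsConnectorSize k ℓ t N) (x : Fin t) :
    edgeIdx k (k - ℓ) 0 (t + x) ⊆ Ico (t * (k - ℓ)) (2 * (t * (k - ℓ)) + ℓ) := fun j hj => by
  have hj := mem_edgeIdx.1 hj
  have := h.add_mul_bounds x
  exact mem_Ico.2 (by omega)

lemma Ico_subset (h : IsConnectorSize k ℓ t N) :
    Ico (t * (k - ℓ)) (2 * (t * (k - ℓ)) + ℓ) ⊆ Ico ℓ (N + ℓ) := by
  have := h.add_eq
  have := h.le_mul
  exact Ico_subset_Ico (by omega) (by omega)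

lemma mem_Ico_or_exists_mem_edgeIdx (h : IsConnectorSize k ℓ t N) {j : ℕ}
    (hj : j ∈ Ico ℓ (N + ℓ)) :
    j ∈ Ico ℓ (t * (k - ℓ)) ∪ Ico (2 * (t * (k - ℓ)) + ℓ) (N + ℓ) ∨
      ∃ x : Fin t, j ∈ edgeIdx k (k - ℓ) 0 (t + x) := by
  have hbounds := h.add_mul_bounds ⟨0, h.one_le_length⟩
  obtain hlow | hlow := lt_or_ge j (t * (k - ℓ))
  · exact .inl (mem_union_left _ (mem_Ico.2 ⟨(mem_Ico.1 hj).1, hlow⟩))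
  obtain hhigh | hhigh := le_or_gt (2 * (t * (k - ℓ)) + ℓ) j
  · exact .inl (mem_union_right _ (mem_Ico.2 ⟨hhigh, (mem_Ico.1 hj).2⟩))
  obtain hfirst | hfirst := lt_or_ge j (t * (k - ℓ) + ℓ)
  · exact .inr ⟨_, mem_edgeIdx.2 (by rw [hbounds.1]; dsimp only; omega)⟩
  have hdiv : (j - (t * (k - ℓ) + ℓ)) / (k - ℓ) < t :=
    (Nat.div_lt_iff_lt_mul (Nat.sub_pos_of_lt h.lt)).2 (by omega)
  have hmod := Nat.mod_lt (j - (t * (k - ℓ) + ℓ)) (Nat.sub_pos_of_lt h.lt)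
  have hsum := Nat.div_add_mod' (j - (t * (k - ℓ) + ℓ)) (k - ℓ)
  exact .inr ⟨⟨_, hdiv⟩, mem_edgeIdx.2 (by rw [(h.add_mul_bounds ⟨_, hdiv⟩).1]; dsimp only; omega)⟩

/-- The middle `t` edges of the path along `A c B`, as a pattern on the positions of `c`. The roots
are the positions outside these edges together with the anchor, which is the first vertex of the
last middle edge; as `(t - 1) * (k - ℓ) < ℓ`, it lies in all of them. -/
def middlePattern (h : IsConnectorSize k ℓ t N) : RootedPattern (Fin N) (Fin t) k where
  edge x := innerPositions N ℓ (edgeIdx k (k - ℓ) 0 (t + x))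
  edge_injective x y hxy := by
    have hedge : edgeIdx k (k - ℓ) 0 (t + x) = edgeIdx k (k - ℓ) 0 (t + y) := by
      rw [← image_innerPositions ((h.edgeIdx_subset x).trans h.Ico_subset),
        ← image_innerPositions ((h.edgeIdx_subset y).trans h.Ico_subset)]
      exact congrArg _ hxy
    exact Fin.ext (Nat.add_left_cancel
      (edgeIdx_injective (h.one_le.trans h.lt.le) (Nat.sub_pos_of_lt h.lt) hedge))
  card_edge x := by
    rw [card_innerPositions ((h.edgeIdx_subset x).trans h.Ico_subset), card_edgeIdx]
  root := innerPositions N ℓ (insert (2 * (t * (k - ℓ)) - (k - ℓ))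
    (Ico ℓ (t * (k - ℓ)) ∪ Ico (2 * (t * (k - ℓ)) + ℓ) (N + ℓ)))
  anchor := ⟨2 * (t * (k - ℓ)) - k, by
    have := h.add_eq; have := h.le_mul; have := h.mul_lt; have := h.one_le; omega⟩
  anchor_mem_root := mem_innerPositions.2 (mem_insert.2 (.inl (by
    have := h.add_mul_bounds ⟨0, h.one_le_length⟩; have := h.one_le_length
    have := h.le_mul; have := h.mul_lt; dsimp only; omega)))
  anchor_mem_edge x := mem_innerPositions.2 (mem_edgeIdx.2 (by
    have := h.add_mul_bounds x; have := h.le_mul; have := h.mul_lt; dsimp only; omega))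
  mem_root_or_edge m := by
    simp only [mem_innerPositions, mem_insert]
    exact (h.mem_Ico_or_exists_mem_edgeIdx (mem_Ico.2 (by omega))).imp_left .inr

lemma card_root_middlePattern (h : IsConnectorSize k ℓ t N) :
    #h.middlePattern.root + (t * (k - ℓ) + ℓ - 1) = N := by
  have hbounds := h.add_mul_bounds ⟨0, h.one_le_length⟩
  have hone := h.one_le
  have hle := h.le_mul
  have hlt := h.mul_lt
  have hadd := h.add_eq
  have hIcc : insert (2 * (t * (k - ℓ)) - (k - ℓ))
      (Ico ℓ (t * (k - ℓ)) ∪ Ico (2 * (t * (k - ℓ)) + ℓ) (N + ℓ)) ⊆ Ico ℓ (N + ℓ) := fun j hj => by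
    simp only [mem_insert, mem_union, mem_Ico] at hj ⊢
    omega
  have hdisj : Disjoint (Ico ℓ (t * (k - ℓ))) (Ico (2 * (t * (k - ℓ)) + ℓ) (N + ℓ)) :=
    disjoint_left.2 fun j hj hj' => by simp only [mem_Ico] at hj hj'; omega
  change #(innerPositions N ℓ _) + _ = N
  rw [card_innerPositions hIcc, card_insert_of_notMem (by
    simp only [mem_union, mem_Ico]; omega), card_union_of_disjoint hdisj, Nat.card_Ico,
    Nat.card_Ico]
  omega

lemma add_mul_le_card_biUnion_edgeIdx_add (h : IsConnectorSize k ℓ t N) {I : Finset (Fin t)}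
    (hI : I.Nonempty) :
    ℓ + #I * (k - ℓ) ≤ #(I.biUnion fun x : Fin t => edgeIdx k (k - ℓ) 0 (t + x)) := by
  have hinj : Function.Injective fun x : Fin t => t + (x : ℕ) := fun x y hxy =>
    Fin.ext (Nat.add_left_cancel hxy)
  have hcard := add_mul_le_card_biUnion_edgeIdx h.lt.le (hI.image fun x : Fin t => t + (x : ℕ))
  rwa [card_image_of_injective I hinj, image_biUnion] at hcard

lemma card_le_card_root_union_biUnion_edge_add (h : IsConnectorSize k ℓ t N) {I : Finset (Fin t)}
    (hI : I.Nonempty) :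
    N ≤ #(h.middlePattern.root ∪ I.biUnion h.middlePattern.edge) + (t - #I) * (k - ℓ) := by
  have hle := h.le_mul
  have hadd := h.add_eq
  set U := I.biUnion fun x : Fin t => edgeIdx k (k - ℓ) 0 (t + x)
  have hcardU : ℓ + #I * (k - ℓ) ≤ #U := h.add_mul_le_card_biUnion_edgeIdx_add hI
  have hmid : U ⊆ Ico (t * (k - ℓ)) (2 * (t * (k - ℓ)) + ℓ) :=
    biUnion_subset.2 fun x _ => h.edgeIdx_subset x
  have hlow : Disjoint (Ico ℓ (t * (k - ℓ))) (Ico (2 * (t * (k - ℓ)) + ℓ) (N + ℓ)) :=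
    disjoint_left.2 fun j hj hj' => by simp only [mem_Ico] at hj hj'; omega
  have hout : Disjoint (Ico ℓ (t * (k - ℓ)) ∪ Ico (2 * (t * (k - ℓ)) + ℓ) (N + ℓ)) U :=
    disjoint_left.2 fun j hj hjU => by
      have hjU := mem_Ico.1 (hmid hjU)
      simp only [mem_union, mem_Ico] at hj
      omega
  have hsub : innerPositions N ℓ
      (Ico ℓ (t * (k - ℓ)) ∪ Ico (2 * (t * (k - ℓ)) + ℓ) (N + ℓ) ∪ U) ⊆
      h.middlePattern.root ∪ I.biUnion h.middlePattern.edge := fun m hm => by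
    rw [mem_innerPositions, mem_union] at hm
    refine mem_union.2 (hm.imp (fun hm => mem_innerPositions.2 (mem_insert_of_mem hm)) fun hm => ?_)
    obtain ⟨x, hx, hmx⟩ := mem_biUnion.1 hm
    exact mem_biUnion.2 ⟨x, hx, mem_innerPositions.2 hmx⟩
  have hcard := card_le_card hsub
  rw [card_innerPositions (union_subset (union_subset (Ico_subset_Ico le_rfl (by omega))
    (Ico_subset_Ico (by omega) le_rfl)) (hmid.trans h.Ico_subset)), card_union_of_disjoint hout,
    card_union_of_disjoint hlow, Nat.card_Ico, Nat.card_Ico] at hcard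
  have hsplit : #I * (k - ℓ) + (t - #I) * (k - ℓ) = t * (k - ℓ) := by
    rw [← add_mul, Nat.add_sub_cancel' (by simpa using card_le_univ I)]
  omega

lemma overlapWeight_middlePattern_le (h : IsConnectorSize k ℓ t N) {p θ : ℝ} (hn : 1 ≤ n)
    (hp : 0 ≤ p) (hθ : θ ∈ Set.Icc 0 1) (hpath : p ^ t * (n : ℝ) ^ (t * (k - ℓ) + ℓ - 1) = θ ^ t)
    (hedge : (n : ℝ) ^ (k - ℓ) * p ≤ θ) :
    h.middlePattern.overlapWeight n p ≤ 2 ^ t * θ := by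
  have hn' : (1 : ℝ) ≤ n := by exact_mod_cast hn
  have hterm : ∀ I ∈ (univ : Finset (Finset (Fin t))).erase univ,
      (n : ℝ) ^ (Fintype.card (Fin N) - #(h.middlePattern.root ∪ I.biUnion h.middlePattern.edge)) *
        p ^ (Fintype.card (Fin t) - #I) ≤ θ := fun I hI => by
    rw [Fintype.card_fin, Fintype.card_fin]
    obtain rfl | hI' := I.eq_empty_or_nonempty
    · have hexp : N - #h.middlePattern.root = t * (k - ℓ) + ℓ - 1 :=
        Nat.sub_eq_of_eq_add' h.card_root_middlePattern.symm
      rw [biUnion_empty, union_empty, card_empty, Nat.sub_zero, hexp, mul_comm, hpath]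
      exact pow_le_of_le_one hθ.1 hθ.2 (Nat.one_le_iff_ne_zero.1 h.one_le_length)
    have hlt : #I < t := by
      simpa using (card_lt_iff_ne_univ I).2 (ne_of_mem_erase hI)
    calc _ ≤ (n : ℝ) ^ ((t - #I) * (k - ℓ)) * p ^ (t - #I) := by
          gcongr
          exact Nat.sub_le_iff_le_add'.2 (h.card_le_card_root_union_biUnion_edge_add hI')
      _ = ((n : ℝ) ^ (k - ℓ) * p) ^ (t - #I) := by rw [mul_pow, ← pow_mul, mul_comm (k - ℓ)]
      _ ≤ θ ^ (t - #I) := by gcongr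
      _ ≤ θ := pow_le_of_le_one hθ.1 hθ.2 (Nat.sub_pos_of_lt hlt).ne'
  calc _ ≤ #((univ : Finset (Finset (Fin t))).erase univ) • θ := sum_le_card_nsmul _ _ _ hterm
    _ ≤ 2 ^ t * θ := by
        rw [nsmul_eq_mul]
        gcongr
        · exact hθ.1
        · exact_mod_cast (card_erase_le.trans (by simp))

end IsConnectorSize

end MiddlePattern

section Degree

variable {n k d ℓ : ℕ} {H : Finset (Finset (Fin n))} {S X : Finset (Fin n)} {η : ℝ}

lemma degOf_le_pow (hH : H ⊆ kSets n k) (S : Finset (Fin n)) : degOf H S ≤ n ^ (k - #S) := by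
  have hmaps : Set.MapsTo (· \ S) ({e ∈ H | S ⊆ e} : Finset (Finset (Fin n)))
      (kSets n (k - #S) : Finset (Finset (Fin n))) := fun e he => by
    obtain ⟨heH, hSe⟩ := mem_filter.1 (mem_coe.1 he)
    refine mem_coe.2 (mem_powersetCard.2 ⟨subset_univ _, ?_⟩)
    rw [card_sdiff_of_subset hSe, (mem_powersetCard.1 (hH heH)).2]
  have hinj : Set.InjOn (· \ S) ({e ∈ H | S ⊆ e} : Finset (Finset (Fin n))) :=
    fun e he e' he' h => by
      rw [← sdiff_union_of_subset (mem_filter.1 (mem_coe.1 he)).2,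
        ← sdiff_union_of_subset (mem_filter.1 (mem_coe.1 he')).2]
      exact congrArg (· ∪ S) h
  calc degOf H S ≤ #(kSets n (k - #S)) := by
        simpa [degOf] using card_le_card_of_injOn _ hmaps hinj
    _ = n.choose (k - #S) := by rw [kSets, card_powersetCard, card_univ, Fintype.card_fin]
    _ ≤ n ^ (k - #S) := Nat.choose_le_pow _ _

lemma degOf_le_card_filter_disjoint_add (hH : H ⊆ kSets n (#S + (d + 1))) (X : Finset (Fin n)) :
    degOf H S ≤ #{e ∈ H | S ⊆ e ∧ Disjoint (e \ S) X} + #X * n ^ d := by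
  have hcover : {e ∈ H | S ⊆ e} ⊆ {e ∈ H | S ⊆ e ∧ Disjoint (e \ S) X} ∪
      (X \ S).biUnion fun x => {e ∈ H | insert x S ⊆ e} := fun e he => by
    obtain ⟨heH, hSe⟩ := mem_filter.1 he
    by_cases h : Disjoint (e \ S) X
    · exact mem_union_left _ (mem_filter.2 ⟨heH, hSe, h⟩)
    · obtain ⟨x, hx, hxX⟩ := not_disjoint_iff.1 h
      obtain ⟨hxe, hxS⟩ := mem_sdiff.1 hx
      exact mem_union_right _ (mem_biUnion.2 ⟨x, mem_sdiff.2 ⟨hxX, hxS⟩,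
        mem_filter.2 ⟨heH, insert_subset hxe hSe⟩⟩)
  have hmeet : ∀ x ∈ X \ S, #{e ∈ H | insert x S ⊆ e} ≤ n ^ d := fun x hx => by
    have hdeg := degOf_le_pow hH (insert x S)
    rw [card_insert_of_notMem (mem_sdiff.1 hx).2, show #S + (d + 1) - (#S + 1) = d by omega] at hdeg
    simpa [degOf] using hdeg
  calc degOf H S ≤ _ := by simpa [degOf] using card_le_card hcover
    _ ≤ #{e ∈ H | S ⊆ e ∧ Disjoint (e \ S) X} + #(X \ S) * n ^ d :=
        (card_union_le _ _).trans (Nat.add_le_add_left (card_biUnion_le_card_mul _ _ _ hmeet) _)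
    _ ≤ _ := by gcongr; exact sdiff_subset

lemma mul_pow_le_card_filter_disjoint (hd : 1 ≤ d) (hH : H ⊆ kSets n (#S + d))
    (hdeg : η * (n : ℝ) ^ d ≤ degOf H S) (hX : (#X : ℝ) ≤ 2 / 3 * η * n) :
    η / 3 * (n : ℝ) ^ d ≤ #{e ∈ H | S ⊆ e ∧ Disjoint (e \ S) X} := by
  obtain ⟨d, rfl⟩ := Nat.exists_eq_add_of_le' hd
  have hle : (degOf H S : ℝ) ≤ #{e ∈ H | S ⊆ e ∧ Disjoint (e \ S) X} + #X * (n : ℝ) ^ d :=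
    mod_cast degOf_le_card_filter_disjoint_add hH X
  have hmeet : (#X : ℝ) * (n : ℝ) ^ d ≤ 2 / 3 * η * (n : ℝ) ^ (d + 1) := by
    rw [pow_succ', ← mul_assoc]
    gcongr
  linarith

end Degree

section Paths

variable {n k ℓ a : ℕ} {H : Finset (Finset (Fin n))} {v : List (Fin n)}

lemma ListSpans.zero (hv : v.Nodup) (hlen : v.length = ℓ) : ListSpans k ℓ 0 H v :=
  ⟨hv, by simp [hlen], by simp⟩

lemma ListSpans.of_drop (hv : v.Nodup) (hlen : k - ℓ ≤ v.length) (hfirst : (v.take k).toFinset ∈ H)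
    (h : ListSpans k ℓ a H (v.drop (k - ℓ))) : ListSpans k ℓ (a + 1) H v := by
  obtain ⟨-, hdrop, hmem⟩ := h
  refine ⟨hv, ?_, fun i hi => ?_⟩
  · rw [List.length_drop] at hdrop
    rw [add_mul, one_mul]
    omega
  · cases i with
    | zero => simpa using hfirst
    | succ i =>
      have := hmem i (Nat.lt_of_succ_lt_succ hi)
      rwa [List.drop_drop, show k - ℓ + i * (k - ℓ) = (i + 1) * (k - ℓ) by ring] at this

lemma ListSpans.reverse (hk : ℓ ≤ k) (h : ListSpans k ℓ a H v) : ListSpans k ℓ a H v.reverse := by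
  obtain ⟨hv, hlen, hmem⟩ := h
  refine ⟨List.nodup_reverse.2 hv, by rwa [List.length_reverse], fun i hi => ?_⟩
  have hsum : (a - 1 - i) * (k - ℓ) + i * (k - ℓ) + k = v.length := by
    obtain ⟨b, rfl⟩ := Nat.exists_eq_add_of_lt hi
    rw [hlen, show i + b + 1 - 1 - i = b by omega]
    linarith [Nat.sub_add_cancel hk, add_mul (i + b) 1 (k - ℓ), add_mul i b (k - ℓ)]
  have hrev : (v.reverse.drop (i * (k - ℓ))).take k =
      ((v.drop ((a - 1 - i) * (k - ℓ))).take k).reverse := by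
    generalize i * (k - ℓ) = x at hsum ⊢
    generalize (a - 1 - i) * (k - ℓ) = y at hsum ⊢
    rw [List.drop_reverse, List.take_reverse, List.drop_take, List.length_take,
      show min (v.length - x) v.length - k = y by omega, show v.length - x - y = k by omega]
  rw [hrev, List.toFinset_reverse]
  exact hmem _ (by omega)

lemma image_filter_mem_edgeIdx {b d i : ℕ} (w : Fin b → Fin n) :
    ({m : Fin b | (m : ℕ) ∈ edgeIdx k d 0 i} : Finset (Fin b)).image w =
      (((List.ofFn w).drop (i * d)).take k).toFinset := by
  ext x
  simp only [edgeIdx, mem_image, mem_filter, mem_univ, true_and, mem_range, List.mem_toFinset,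
    List.mem_iff_getElem, List.getElem_take, List.getElem_drop, List.getElem_ofFn,
    List.length_take, List.length_drop, List.length_ofFn, zero_add]
  constructor
  · rintro ⟨m, ⟨j, hj, hm⟩, rfl⟩
    exact ⟨j, by have := m.isLt; omega, congrArg w (Fin.ext hm)⟩
  · rintro ⟨j, hj, rfl⟩
    exact ⟨_, ⟨j, by omega, rfl⟩, rfl⟩

lemma mul_le_card_of_le_card_preimage_append {α : Type*} {G T : Finset (List α)} {m : ℕ}
    {x y : ℝ} (hy : 0 ≤ y) (hlen : ∀ g ∈ G, g.length = m) (hG : x ≤ #G)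
    (hT : ∀ g ∈ G, y ≤ #(T.preimage (g ++ ·) (List.append_right_injective g).injOn)) :
    x * y ≤ #T := by
  set P : List α → Finset (List α) := fun g =>
    T.preimage (g ++ ·) (List.append_right_injective g).injOn
  have hinj : Set.InjOn (fun gL : Σ _ : List α, List α => gL.1 ++ gL.2)
      (G.sigma P : Finset (Σ _ : List α, List α)) := by
    rintro ⟨g, L⟩ hgL ⟨g', L'⟩ hgL' h
    simp only [mem_coe, mem_sigma] at hgL hgL'
    obtain ⟨rfl, rfl⟩ := List.append_inj h ((hlen g hgL.1).trans (hlen g' hgL'.1).symm)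
    rfl
  have hmaps : Set.MapsTo (fun gL : Σ _ : List α, List α => gL.1 ++ gL.2)
      (G.sigma P : Finset (Σ _ : List α, List α)) (T : Finset (List α)) :=
    fun gL hgL => mem_preimage.1 (mem_sigma.1 hgL).2
  calc x * y ≤ #G * y := by gcongr
    _ ≤ ∑ g ∈ G, (#(P g) : ℝ) := by simpa using card_nsmul_le_sum G _ y hT
    _ = #(G.sigma P) := by rw [card_sigma, Nat.cast_sum]
    _ ≤ #T := by exact_mod_cast card_le_card_of_injOn _ hmaps hinj

/-- The lists `L` avoiding `X` for which `S ++ L` spans an `ℓ`-path of length `t` in `H`. For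
`k = 1` and `ℓ = 0` these are just the lists of `t` distinct vertices. -/
noncomputable def pathExtensions (k ℓ t : ℕ) (H : Finset (Finset (Fin n))) (S : List (Fin n))
    (X : Finset (Fin n)) : Finset (List (Fin n)) :=
  {L ∈ (List.finite_length_eq (Fin n) (t * (k - ℓ))).toFinset |
    ListSpans k ℓ t H (S ++ L) ∧ ∀ x ∈ L, x ∉ X}

lemma mem_pathExtensions {S L : List (Fin n)} {X : Finset (Fin n)} {t : ℕ} (hS : S.length = ℓ) :
    L ∈ pathExtensions k ℓ t H S X ↔ ListSpans k ℓ t H (S ++ L) ∧ ∀ x ∈ L, x ∉ X := by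
  simp only [pathExtensions, mem_filter, Set.Finite.mem_toFinset, Set.mem_ofPred_eq,
    and_iff_right_iff_imp]
  rintro ⟨⟨-, hlen, -⟩, -⟩
  rw [List.length_append] at hlen
  omega

lemma length_of_mem_pathExtensions {S L : List (Fin n)} {X : Finset (Fin n)} {t : ℕ}
    (hL : L ∈ pathExtensions k ℓ t H S X) : L.length = t * (k - ℓ) := by
  simpa using (mem_filter.1 hL).1

lemma mul_pow_le_card_pathExtensions_one {S : List (Fin n)} {X : Finset (Fin n)} {η : ℝ}
    (hlk : ℓ < k) (hH : H ⊆ kSets n k) (hS : S.Nodup) (hlen : S.length = ℓ)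
    (hdeg : η * (n : ℝ) ^ (k - ℓ) ≤ degOf H S.toFinset) (hX : (#X : ℝ) ≤ 2 / 3 * η * n) :
    η / 3 * (n : ℝ) ^ (k - ℓ) ≤ #(pathExtensions k ℓ 1 H S X) := by
  have hcard : #S.toFinset = ℓ := by rw [List.toFinset_card_of_nodup hS, hlen]
  have hHS : H ⊆ kSets n (#S.toFinset + (k - ℓ)) := by
    rwa [hcard, Nat.add_sub_cancel' hlk.le]
  refine (mul_pow_le_card_filter_disjoint (by omega) hHS hdeg hX).trans (Nat.cast_le.2 ?_)
  refine card_le_card_of_injOn (fun e => (e \ S.toFinset).toList) (fun e he => ?_)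
    fun e he e' he' h => ?_
  · obtain ⟨heH, hSe, heX⟩ := mem_filter.1 (mem_coe.1 he)
    have hedge : (S ++ (e \ S.toFinset).toList).toFinset = e := by
      rw [List.toFinset_append, toList_toFinset, union_sdiff_of_subset hSe]
    have hlength : (S ++ (e \ S.toFinset).toList).length = k := by
      rw [List.length_append, length_toList, card_sdiff_of_subset hSe,
        (mem_powersetCard.1 (hH heH)).2, hcard, hlen, Nat.add_sub_cancel' hlk.le]
    have hnodup : (S ++ (e \ S.toFinset).toList).Nodup :=
      List.nodup_append'.2 ⟨hS, nodup_toList _, fun x hx hxe =>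
        (mem_sdiff.1 (mem_toList.1 hxe)).2 (List.mem_toFinset.2 hx)⟩
    beta_reduce
    refine mem_coe.2 ((mem_pathExtensions hlen).2 ⟨.of_drop hnodup (by omega) ?_
      (.zero (hnodup.sublist (List.drop_sublist _ _)) (by rw [List.length_drop]; omega)), ?_⟩)
    · rwa [List.take_of_length_le hlength.le, hedge]
    · exact fun x hx => disjoint_left.1 heX (mem_toList.1 hx)
  · have hsdiff := congrArg List.toFinset h
    simp only [toList_toFinset] at hsdiff
    rw [← sdiff_union_of_subset (mem_filter.1 he).2.1, hsdiff,
      sdiff_union_of_subset (mem_filter.1 he').2.1]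

lemma append_mem_pathExtensions {S g L : List (Fin n)} {X : Finset (Fin n)} {t : ℕ} (hlk : ℓ < k)
    (hS : S.length = ℓ) (hg : g ∈ pathExtensions k ℓ 1 H S X)
    (hL : L ∈ pathExtensions k ℓ t H ((S ++ g).drop (k - ℓ)) (X ∪ (S ++ g).toFinset)) :
    g ++ L ∈ pathExtensions k ℓ (t + 1) H S X := by
  have hglen := length_of_mem_pathExtensions hg
  obtain ⟨⟨hgnodup, hgpath, hgmem⟩, hgX⟩ := (mem_pathExtensions hS).1 hg
  obtain ⟨hLpath, hLX⟩ := (mem_pathExtensions (by simp [hS, hglen])).1 hL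
  have hlen : (S ++ g).length = k := by omega
  refine (mem_pathExtensions hS).2 ⟨?_, fun x hx => ?_⟩
  · rw [← List.append_assoc]
    refine .of_drop ?_ (by rw [List.length_append]; omega) ?_ ?_
    · exact List.nodup_append'.2 ⟨hgnodup, hLpath.1.of_append_right, fun x hx hxL =>
        hLX x hxL (mem_union_right _ (List.mem_toFinset.2 hx))⟩
    · rw [List.take_left' hlen]
      simpa [List.take_of_length_le hlen.le] using hgmem 0 one_pos
    · rwa [List.drop_append_of_le_length (by omega)]
  · rcases List.mem_append.1 hx with hx | hx
    · exact hgX x hx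
    · exact fun hxX => hLX x hx (mem_union_left _ hxX)

/-- A `k`-graph in which every `ℓ`-set has degree either zero or at least `η * n ^ (k - ℓ)`. -/
structure HasDegreeGap (k ℓ : ℕ) (η : ℝ) (H : Finset (Finset (Fin n))) : Prop where
  subset_kSets : H ⊆ kSets n k
  degOf_eq_zero_or_le : ∀ S : Finset (Fin n), #S = ℓ →
    degOf H S = 0 ∨ η * (n : ℝ) ^ (k - ℓ) ≤ degOf H S

lemma HasDegreeGap.pow_le_card_pathExtensions {η : ℝ} (hH : HasDegreeGap k ℓ η H) (hη : 0 ≤ η)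
    (hlk : ℓ < k) (t : ℕ) {S : List (Fin n)} {X : Finset (Fin n)} (hS : S.Nodup)
    (hlen : S.length = ℓ) (hdeg : η * (n : ℝ) ^ (k - ℓ) ≤ degOf H S.toFinset)
    (hX : ((#X + t * k : ℕ) : ℝ) ≤ 2 / 3 * η * n) :
    (η / 3 * (n : ℝ) ^ (k - ℓ)) ^ t ≤ #(pathExtensions k ℓ t H S X) := by
  induction t generalizing S X with
  | zero =>
    rw [pow_zero, Nat.one_le_cast, one_le_card]
    exact ⟨[], (mem_pathExtensions hlen).2 ⟨by simpa using .zero hS hlen, by simp⟩⟩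
  | succ t ih =>
    push_cast at hX
    have htk : (0 : ℝ) ≤ t * k ∧ (0 : ℝ) ≤ k := ⟨by positivity, by positivity⟩
    rw [pow_succ']
    refine mul_le_card_of_le_card_preimage_append (G := pathExtensions k ℓ 1 H S X)
      (by positivity) (fun g => length_of_mem_pathExtensions)
      (mul_pow_le_card_pathExtensions_one hlk hH.subset_kSets hS hlen hdeg (by linarith))
      fun g hg => ?_
    refine le_trans ?_ (Nat.cast_le.2 (card_le_card fun L hL =>
      mem_preimage.2 (append_mem_pathExtensions hlk hlen hg hL)))
    obtain ⟨⟨hnodup, hpath, hmem⟩, -⟩ := (mem_pathExtensions hlen).1 hg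
    have hdrop : ((S ++ g).drop (k - ℓ)).Nodup := hnodup.sublist (List.drop_sublist _ _)
    have hdroplen : ((S ++ g).drop (k - ℓ)).length = ℓ := by rw [List.length_drop]; omega
    refine ih hdrop hdroplen ?_ ?_
    · have hcard := (List.toFinset_card_of_nodup hdrop).trans hdroplen
      refine (hH.degOf_eq_zero_or_le _ hcard).resolve_left fun h => ?_
      have hfirst := hmem 0 one_pos
      rw [zero_mul, List.drop_zero, List.take_of_length_le (by omega)] at hfirst
      exact (filter_eq_empty_iff.1 (card_eq_zero.1 h)) hfirst fun x hx =>
        List.mem_toFinset.2 (List.mem_of_mem_drop (List.mem_toFinset.1 hx))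
    · have hcard : #(X ∪ (S ++ g).toFinset) ≤ #X + k :=
        (card_union_le _ _).trans (Nat.add_le_add_left
          ((List.toFinset_card_le _).trans (by omega)) _)
      have : (#(X ∪ (S ++ g).toFinset) : ℝ) ≤ #X + k := mod_cast hcard
      push_cast
      linarith

end Paths

section Linkers

variable {n k ℓ t N : ℕ} {H : Finset (Finset (Fin n))} {A B : Fin ℓ → Fin n} {η : ℝ}

lemma ofFn_concat3 {p q r : ℕ} (A : Fin p → Fin n) (C : Fin q → Fin n) (B : Fin r → Fin n) :
    List.ofFn (concat3 A C B) = List.ofFn A ++ (List.ofFn C ++ List.ofFn B) := by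
  refine List.ext_getElem (by simp [Nat.add_assoc]) fun i h1 h2 => ?_
  simp only [List.getElem_ofFn, concat3, List.getElem_append, List.length_ofFn, Nat.sub_sub]
  split_ifs <;> first | rfl | omega

lemma toFinset_ofFn {m : ℕ} (v : Fin m → Fin n) : (List.ofFn v).toFinset = univ.image v := by
  ext
  simp [List.mem_ofFn]

lemma pow_le_card_pathExtensions_kSets_one {m : ℕ} {X : Finset (Fin n)}
    (hX : ((#X + m : ℕ) : ℝ) ≤ 2 / 3 * n) :
    ((n : ℝ) / 3) ^ m ≤ #(pathExtensions 1 0 m (kSets n 1) [] X) := by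
  have hdeg : degOf (kSets n 1) ∅ = n := by simp [degOf, kSets]
  have hgap : HasDegreeGap 1 0 1 (kSets n 1) :=
    ⟨subset_rfl, fun S hS => .inr (by simp [card_eq_zero.1 hS, hdeg])⟩
  have := hgap.pow_le_card_pathExtensions zero_le_one one_pos m List.nodup_nil rfl (by simp [hdeg])
    (X := X) (by simpa using hX)
  simpa [← div_eq_inv_mul] using this

lemma card_union_toFinset_le (Z : Finset (Fin n)) (l : List (Fin n)) :
    #(Z ∪ l.toFinset) ≤ #Z + l.length :=
  (card_union_le _ _).trans (Nat.add_le_add_left l.toFinset_card_le _)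

/-- The tuples `c` for which the first `t` and the last `t` edges of the `ℓ`-path of length `3t`
along `A c B` lie in `H`; the middle `t` edges are unconstrained. -/
noncomputable def linkers (k ℓ t N : ℕ) (H : Finset (Finset (Fin n))) (A B : Fin ℓ → Fin n) :
    Finset (Fin N → Fin n) :=
  {c | Function.Injective (concat3 A c B) ∧
    ListSpans k ℓ t H ((List.ofFn (concat3 A c B)).take (t * (k - ℓ) + ℓ)) ∧
    ListSpans k ℓ t H ((List.ofFn (concat3 A c B)).drop (2 * t * (k - ℓ)))}

/-- Two disjoint tuples of distinct vertices, both of degree at least `η * n ^ (k - ℓ)`. -/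
structure IsLargeDegreePair (k : ℕ) (η : ℝ) (H : Finset (Finset (Fin n))) (A B : Fin ℓ → Fin n) :
    Prop where
  injective_left : Function.Injective A
  injective_right : Function.Injective B
  disjoint : ∀ m m', A m ≠ B m'
  le_degOf_left : η * (n : ℝ) ^ (k - ℓ) ≤ degOf H (univ.image A)
  le_degOf_right : η * (n : ℝ) ^ (k - ℓ) ≤ degOf H (univ.image B)

namespace IsConnectorSize

lemma exists_mem_linkers_ofFn_eq (h : IsConnectorSize k ℓ t N) {L₁ f L₂ : List (Fin n)}
    (h₁ : ListSpans k ℓ t H (List.ofFn A ++ L₁)) (hf : f.length = t * (k - ℓ) - ℓ)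
    (h₂ : ListSpans k ℓ t H ((List.ofFn B).reverse ++ L₂))
    (hnodup : (List.ofFn A ++ (L₁ ++ (f ++ L₂.reverse) ++ List.ofFn B)).Nodup) :
    ∃ c ∈ linkers k ℓ t N H A B, List.ofFn c = L₁ ++ (f ++ L₂.reverse) := by
  have hlen₁ := h₁.2.1
  have hlen₂ := h₂.2.1
  simp only [List.length_append, List.length_reverse, List.length_ofFn] at hlen₁ hlen₂
  have hle := h.le_mul
  have hadd := h.add_eq
  have h2t : 2 * t * (k - ℓ) = 2 * (t * (k - ℓ)) := mul_assoc _ _ _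
  have hlen : (L₁ ++ (f ++ L₂.reverse)).length = N := by
    simp only [List.length_append, List.length_reverse]
    omega
  obtain ⟨c, hc⟩ : ∃ c : Fin N → Fin n, List.ofFn c = L₁ ++ (f ++ L₂.reverse) := by
    subst hlen
    exact ⟨_, List.ofFn_get _⟩
  have hconcat := ofFn_concat3 A c B
  rw [hc] at hconcat
  refine ⟨c, mem_filter.2 ⟨mem_univ _, ?_, ?_, ?_⟩, hc⟩
  · rwa [← List.nodup_ofFn, hconcat]
  · rw [hconcat, List.append_assoc, ← List.append_assoc,
      List.take_left' (by simp only [List.length_append, List.length_ofFn]; omega)]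
    exact h₁
  · have hassoc : List.ofFn A ++ (L₁ ++ (f ++ L₂.reverse) ++ List.ofFn B) =
        List.ofFn A ++ L₁ ++ f ++ ((List.ofFn B).reverse ++ L₂).reverse := by simp
    rw [hconcat, hassoc,
      List.drop_left' (by simp only [List.length_append, List.length_ofFn]; omega)]
    exact h₂.reverse h.lt.le

lemma append_reverse_mem_image_ofFn_linkers (h : IsConnectorSize k ℓ t N)
    {L₁ f L₂ : List (Fin n)} {Z : Finset (Fin n)} (hAB : ∀ m m', A m ≠ B m')
    (h₁ : L₁ ∈ pathExtensions k ℓ t H (List.ofFn A) (Z ∪ (List.ofFn B).toFinset))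
    (hf : f ∈ pathExtensions 1 0 (t * (k - ℓ) - ℓ) (kSets n 1) []
      (Z ∪ (List.ofFn A ++ L₁ ++ List.ofFn B).toFinset))
    (h₂ : L₂ ∈ pathExtensions k ℓ t H (List.ofFn B).reverse
      (Z ∪ (List.ofFn A ++ L₁ ++ f).toFinset)) :
    L₁ ++ (f ++ L₂.reverse) ∈
      ({c ∈ linkers k ℓ t N H A B | ∀ q, c q ∉ Z} : Finset _).image List.ofFn := by
  obtain ⟨hpath₁, havoid₁⟩ := (mem_pathExtensions (by simp)).1 h₁
  obtain ⟨hpathf, havoidf⟩ := (mem_pathExtensions rfl).1 hf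
  obtain ⟨hpath₂, havoid₂⟩ := (mem_pathExtensions (by simp)).1 h₂
  have hnodup : (List.ofFn A ++ (L₁ ++ (f ++ L₂.reverse) ++ List.ofFn B)).Nodup := by
    have hnodup₁ := hpath₁.1
    have hnodupf : f.Nodup := hpathf.1
    have hnodup₂ := hpath₂.1
    have hdisj : ∀ x ∈ List.ofFn A, x ∉ List.ofFn B := by simpa [List.mem_ofFn] using
      fun m m' => (hAB m m').symm
    simp only [List.nodup_append', List.nodup_reverse, List.Disjoint, List.mem_reverse, mem_union,
      List.mem_toFinset, List.mem_append] at *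
    grind
  obtain ⟨c, hc, hcL⟩ := h.exists_mem_linkers_ofFn_eq hpath₁
    ((length_of_mem_pathExtensions hf).trans (mul_one _)) hpath₂ hnodup
  refine mem_image.2 ⟨c, mem_filter.2 ⟨hc, fun q => ?_⟩, hcL⟩
  have hq : c q ∈ L₁ ++ (f ++ L₂.reverse) := hcL ▸ List.mem_ofFn.2 ⟨q, rfl⟩
  simp only [List.mem_append, List.mem_reverse] at hq
  rcases hq with hq | hq | hq
  · exact fun hqZ => havoid₁ _ hq (mem_union_left _ hqZ)
  · exact fun hqZ => havoidf _ hq (mem_union_left _ hqZ)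
  · exact fun hqZ => havoid₂ _ hq (mem_union_left _ hqZ)

lemma pow_mul_pow_le_card_preimage_linkers (h : IsConnectorSize k ℓ t N)
    (hH : HasDegreeGap k ℓ η H) (hη : 0 ≤ η) (hη₁ : η ≤ 1) (hAB : IsLargeDegreePair k η H A B)
    {Z : Finset (Fin n)} (hZ : ((#Z + (2 * ℓ + N) + t * k : ℕ) : ℝ) ≤ 2 / 3 * η * n)
    {L₁ : List (Fin n)}
    (h₁ : L₁ ∈ pathExtensions k ℓ t H (List.ofFn A) (Z ∪ (List.ofFn B).toFinset)) :
    ((n : ℝ) / 3) ^ (t * (k - ℓ) - ℓ) * (η / 3 * (n : ℝ) ^ (k - ℓ)) ^ t ≤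
      #((({c ∈ linkers k ℓ t N H A B | ∀ q, c q ∉ Z} : Finset _).image List.ofFn).preimage (L₁ ++ ·)
        (List.append_right_injective L₁).injOn) := by
  have hle := h.le_mul
  have hadd := h.add_eq
  have hlen₁ := length_of_mem_pathExtensions h₁
  have hfree : t * (k - ℓ) - ℓ ≤ t * k :=
    (Nat.sub_le _ _).trans (Nat.mul_le_mul_left _ (Nat.sub_le _ _))
  refine mul_le_card_of_le_card_preimage_append (by positivity)
    (fun f => length_of_mem_pathExtensions) (pow_le_card_pathExtensions_kSets_one
      (X := Z ∪ (List.ofFn A ++ L₁ ++ List.ofFn B).toFinset) ?_) fun f hf => ?_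
  · have hcard := card_union_toFinset_le Z (List.ofFn A ++ L₁ ++ List.ofFn B)
    simp only [List.length_append, List.length_ofFn] at hcard
    have hroom : (2 : ℝ) / 3 * η * n ≤ 2 / 3 * n := by
      nlinarith [(Nat.cast_nonneg n : (0 : ℝ) ≤ n)]
    exact (Nat.cast_le.2 (by omega)).trans (hZ.trans hroom)
  · have hlenf := length_of_mem_pathExtensions hf
    have hcard := card_union_toFinset_le Z (List.ofFn A ++ L₁ ++ f)
    simp only [List.length_append, List.length_ofFn] at hcard
    refine (hH.pow_le_card_pathExtensions hη h.lt t
      (List.nodup_reverse.2 (List.nodup_ofFn.2 hAB.injective_right)) (by simp)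
      (by rw [List.toFinset_reverse, toFinset_ofFn]; exact hAB.le_degOf_right)
      ((Nat.cast_le.2 (by omega)).trans hZ)
      (X := Z ∪ (List.ofFn A ++ L₁ ++ f).toFinset)).trans ?_
    rw [← card_image_of_injective _ List.reverse_injective]
    refine Nat.cast_le.2 (card_le_card fun L hL => ?_)
    obtain ⟨L₂, h₂, rfl⟩ := mem_image.1 hL
    exact mem_preimage.2 (mem_preimage.2
      (h.append_reverse_mem_image_ofFn_linkers hAB.disjoint h₁ hf h₂))

lemma mul_pow_le_card_linkers_avoiding (h : IsConnectorSize k ℓ t N)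
    (hH : HasDegreeGap k ℓ η H) (hη : 0 ≤ η) (hη₁ : η ≤ 1) (hAB : IsLargeDegreePair k η H A B)
    {Z : Finset (Fin n)} (hZ : ((#Z + (2 * ℓ + N) + t * k : ℕ) : ℝ) ≤ 2 / 3 * η * n) :
    (η / 3) ^ (2 * t) * (1 / 3) ^ (t * (k - ℓ) - ℓ) * (n : ℝ) ^ N ≤
      #{c ∈ linkers k ℓ t N H A B | ∀ q, c q ∉ Z} := by
  have hle := h.le_mul
  have hadd := h.add_eq
  have hN : N = t * (k - ℓ) + (t * (k - ℓ) - ℓ) + t * (k - ℓ) := by omega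
  have hcard := card_union_toFinset_le Z (List.ofFn B)
  rw [List.length_ofFn] at hcard
  calc (η / 3) ^ (2 * t) * (1 / 3) ^ (t * (k - ℓ) - ℓ) * (n : ℝ) ^ N
      = (η / 3 * (n : ℝ) ^ (k - ℓ)) ^ t *
          (((n : ℝ) / 3) ^ (t * (k - ℓ) - ℓ) * (η / 3 * (n : ℝ) ^ (k - ℓ)) ^ t) := by
        rw [hN, pow_add, pow_add, mul_pow, div_eq_mul_one_div (n : ℝ) 3, mul_pow (n : ℝ), ← pow_mul,
          mul_comm t]
        ring
    _ ≤ #(({c ∈ linkers k ℓ t N H A B | ∀ q, c q ∉ Z} : Finset _).image List.ofFn) :=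
        mul_le_card_of_le_card_preimage_append (by positivity)
          (fun L₁ => length_of_mem_pathExtensions)
          (hH.pow_le_card_pathExtensions hη h.lt t (List.nodup_ofFn.2 hAB.injective_left) (by simp)
            (by rw [toFinset_ofFn]; exact hAB.le_degOf_left)
            ((Nat.cast_le.2 (by omega)).trans hZ))
          fun L₁ h₁ => h.pow_mul_pow_le_card_preimage_linkers hH hη hη₁ hAB hZ h₁
    _ ≤ _ := mod_cast card_image_le

lemma spansPath_of_mem_linkers (h : IsConnectorSize k ℓ t N) {E : Finset (Finset (Fin n))}
    {c : Fin N → Fin n} (hc : c ∈ linkers k ℓ t N H A B) (hE : h.middlePattern.copyEdges c ⊆ E) :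
    SpansPath k ℓ (3 * t) (H ∪ E) (concat3 A c B) := by
  obtain ⟨-, hinj, hfirst, hlast⟩ := mem_filter.1 hc
  refine ⟨hinj, fun i hi => ?_⟩
  obtain hi₁ | hi₁ := lt_or_ge i t
  · refine mem_union_left _ ?_
    have hend : i * (k - ℓ) + k ≤ t * (k - ℓ) + ℓ := by
      have := (h.add_mul_bounds ⟨i, hi₁⟩).2
      dsimp only at this
      omega
    have hedge := hfirst.2.2 i hi₁
    rw [List.drop_take, List.take_take, min_eq_left (by omega)] at hedge
    rwa [image_filter_mem_edgeIdx]
  obtain hi₂ | hi₂ := lt_or_ge i (2 * t)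
  · obtain ⟨x, rfl⟩ : ∃ x : Fin t, i = t + x :=
      ⟨⟨i - t, by omega⟩, (Nat.add_sub_cancel' hi₁).symm⟩
    rw [image_filter_concat3 ((h.edgeIdx_subset x).trans h.Ico_subset)]
    exact mem_union_right _ (hE (mem_image_of_mem _ (mem_univ x)))
  · obtain ⟨j, rfl⟩ := Nat.exists_eq_add_of_le hi₂
    have hedge := hlast.2.2 j (by omega)
    rw [List.drop_drop, ← add_mul] at hedge
    rw [image_filter_mem_edgeIdx]
    exact mem_union_left _ hedge

end IsConnectorSize

end Linkers

section Connecting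

variable {n k ℓ t N m : ℕ} {H E : Finset (Finset (Fin n))} {W : Finset (Fin n)}
  {D 𝒞 : Finset (Fin N → Fin n)} {p β η θ κ : ℝ}

lemma injective_of_mem_linkers {A B : Fin ℓ → Fin n} {c : Fin N → Fin n}
    (hc : c ∈ linkers k ℓ t N H A B) : Function.Injective c := by
  have hnodup := List.nodup_ofFn.2 (mem_filter.1 hc).2.1
  rw [ofFn_concat3] at hnodup
  exact List.nodup_ofFn.1 hnodup.of_append_right.of_append_left

lemma card_largeDegreePair_le :
    Fintype.card {AB : (Fin ℓ → Fin n) × (Fin ℓ → Fin n) // IsLargeDegreePair k η H AB.1 AB.2} ≤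
      n ^ (2 * ℓ) :=
  (Fintype.card_subtype_le _).trans (by simp [Fintype.card_prod, two_mul, pow_add])

/-- A family of at most `β * n` pairwise disjoint `N`-sets avoiding `W`, such that any two disjoint
ordered `ℓ`-sets of large degree in `H` are connected by at least `3 * β ^ 3 * n` of its members,
through paths of length `3 * t` in `H ∪ E`. -/
def IsConnectingFamily (k ℓ t : ℕ) (β η : ℝ) (H E : Finset (Finset (Fin n))) (W : Finset (Fin n))
    (𝒞 : Finset (Fin N → Fin n)) : Prop :=
  (∀ c ∈ 𝒞, Function.Injective c) ∧
  (∀ c ∈ 𝒞, ∀ c' ∈ 𝒞, c ≠ c' → ∀ m m', c m ≠ c' m') ∧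
  (∀ c ∈ 𝒞, ∀ m, c m ∉ W) ∧
  (#𝒞 : ℝ) ≤ β * n ∧
  ∀ A B : Fin ℓ → Fin n, Function.Injective A → Function.Injective B → (∀ m m', A m ≠ B m') →
    η * (n : ℝ) ^ (k - ℓ) ≤ degOf H (univ.image A) →
    η * (n : ℝ) ^ (k - ℓ) ≤ degOf H (univ.image B) →
    3 * β ^ 3 * n ≤ #{c ∈ 𝒞 | SpansPath k ℓ (3 * t) (H ∪ E) (concat3 A c B)}

namespace IsConnectorSize

/-- A packing of copies of the middle pattern into `E` meeting the linkers of every pair of tuples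
of large degree in at least `T` places. -/
def IsLinkerPacking (h : IsConnectorSize k ℓ t N) (η : ℝ) (H : Finset (Finset (Fin n))) (m T : ℕ)
    (W : Finset (Fin n)) (E : Finset (Finset (Fin n))) (D : Finset (Fin N → Fin n)) : Prop :=
  h.middlePattern.IsPacking m W E D ∧
    ∀ A B, IsLargeDegreePair k η H A B → T ≤ #(D ∩ linkers k ℓ t N H A B)

lemma monotone_exists_isLinkerPacking (h : IsConnectorSize k ℓ t N) (η : ℝ)
    (H : Finset (Finset (Fin n))) (m T : ℕ) (W : Finset (Fin n)) :
    Monotone fun E => ∃ D, h.IsLinkerPacking η H m T W E D :=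
  fun _ _ hE ⟨D, hD, hcount⟩ => ⟨D, hD.mono le_rfl subset_rfl hE, hcount⟩

lemma isConnectingFamily_of_isLinkerPacking (h : IsConnectorSize k ℓ t N) (hβ : 0 ≤ β)
    (hD : h.IsLinkerPacking η H ⌊β * n⌋₊ ⌈3 * β ^ 3 * n⌉₊ W E D) :
    IsConnectingFamily k ℓ t β η H E W D := by
  obtain ⟨hpack, hcount⟩ := hD
  refine ⟨hpack.injective, hpack.disjoint, hpack.avoids,
    (Nat.le_floor_iff (by positivity)).1 hpack.card_le, fun A B hA hB hAB hdegA hdegB => ?_⟩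
  refine (Nat.ceil_le.1 (hcount A B ⟨hA, hB, hAB, hdegA, hdegB⟩)).trans
    (Nat.cast_le.2 (card_le_card fun c hc => ?_))
  obtain ⟨hcD, hclink⟩ := mem_inter.1 hc
  exact mem_filter.2 ⟨hcD, h.spansPath_of_mem_linkers hclink (hpack.copyEdges_subset c hcD)⟩

lemma mul_rate_le_card_linkers_avoiding (h : IsConnectorSize k ℓ t N) (hH : HasDegreeGap k ℓ η H)
    (hη : η ∈ Set.Icc 0 1) (hp : 0 ≤ p)
    (hpath : p ^ t * (n : ℝ) ^ (t * (k - ℓ) + ℓ - 1) = θ ^ t)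
    (hκ : 4 * (N : ℝ) ^ N * κ = θ ^ t * ((η / 3) ^ (2 * t) * (1 / 3) ^ (t * (k - ℓ) - ℓ)))
    {A B : Fin ℓ → Fin n} (hAB : IsLargeDegreePair k η H A B) {Z : Finset (Fin n)}
    (hZ : ((#Z + (2 * ℓ + N) + t * k : ℕ) : ℝ) ≤ 2 / 3 * η * n) :
    4 * (N : ℝ) ^ N * (n : ℝ) ^ #h.middlePattern.root * κ ≤
      p ^ t * #{c ∈ linkers k ℓ t N H A B | ∀ q, c q ∉ Z} :=
  calc 4 * (N : ℝ) ^ N * (n : ℝ) ^ #h.middlePattern.root * κ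
      = p ^ t * ((η / 3) ^ (2 * t) * (1 / 3) ^ (t * (k - ℓ) - ℓ) *
          (n : ℝ) ^ (#h.middlePattern.root + (t * (k - ℓ) + ℓ - 1))) := by
        rw [mul_right_comm, hκ, ← hpath, pow_add]
        ring
    _ ≤ _ := by
        rw [h.card_root_middlePattern]
        exact mul_le_mul_of_nonneg_left
          (h.mul_pow_le_card_linkers_avoiding hH hη.1 hη.2 hAB hZ) (pow_nonneg hp _)

lemma le_gProb_exists_isLinkerPacking (h : IsConnectorSize k ℓ t N) (hn : 1 ≤ n)
    (hH : HasDegreeGap k ℓ η H) (hη : η ∈ Set.Icc 0 1) (hp : p ∈ Set.Icc 0 1)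
    (hθ : θ ∈ Set.Icc 0 1) (hθt : 2 ^ t * θ ≤ 1 / 2)
    (hpath : p ^ t * (n : ℝ) ^ (t * (k - ℓ) + ℓ - 1) = θ ^ t) (hedge : (n : ℝ) ^ (k - ℓ) * p ≤ θ)
    (hκ₁ : κ ≤ 1)
    (hκ : 4 * (N : ℝ) ^ N * κ = θ ^ t * ((η / 3) ^ (2 * t) * (1 / 3) ^ (t * (k - ℓ) - ℓ)))
    (hW : ((#W + N * m + (2 * ℓ + N) + t * k : ℕ) : ℝ) ≤ 2 / 3 * η * n) (T : ℕ) :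
    1 - 2 ^ T * ((1 - κ) ^ m * (n : ℝ) ^ (2 * ℓ)) ≤
      gProb n k p fun E => ∃ D, h.IsLinkerPacking η H m T W E D := by
  have : NeZero n := ⟨Nat.one_le_iff_ne_zero.1 hn⟩
  have hpacking := h.middlePattern.le_gProb_exists_isPacking (W := W) (m := m)
    (A := fun AB : {AB : (Fin ℓ → Fin n) × (Fin ℓ → Fin n) // IsLargeDegreePair k η H AB.1 AB.2} =>
      linkers k ℓ t N H AB.1.1 AB.1.2) hp
    ((h.overlapWeight_middlePattern_le hn hp.1 hθ hpath hedge).trans hθt)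
    (fun _ _ => injective_of_mem_linkers) hκ₁
    (fun AB Z hZ => by
      rw [Fintype.card_fin] at hZ
      have hroom : ((#Z + (2 * ℓ + N) + t * k : ℕ) : ℝ) ≤ 2 / 3 * η * n :=
        (Nat.cast_le.2 (by omega)).trans hW
      convert h.mul_rate_le_card_linkers_avoiding hH hη hp.1 hpath hκ AB.2 hroom <;>
        exact Fintype.card_fin _) T
  refine le_trans ?_ (hpacking.trans (gProb_mono hp fun E ⟨D, hD, hcount⟩ =>
    ⟨D, hD, fun A B hAB => hcount ⟨(A, B), hAB⟩⟩))
  have : 0 ≤ 1 - κ := sub_nonneg.2 hκ₁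
  gcongr
  exact_mod_cast card_largeDegreePair_le

lemma exists_edgeProb (h : IsConnectorSize k ℓ t N) (hn : 1 ≤ n) (hθ : 0 ≤ θ) :
    ∃ p : ℝ, 0 ≤ p ∧ p ^ t * (n : ℝ) ^ (t * (k - ℓ) + ℓ - 1) = θ ^ t ∧
      (n : ℝ) ^ (k - ℓ) * p ≤ θ := by
  have hn' : (1 : ℝ) ≤ n := by exact_mod_cast hn
  have ht : t ≠ 0 := Nat.one_le_iff_ne_zero.1 h.one_le_length
  obtain ⟨r, hr, hrt⟩ : ∃ r : ℝ, 0 < r ∧ r ^ t = (n : ℝ) ^ (t * (k - ℓ) + ℓ - 1) :=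
    ⟨((n : ℝ) ^ (t * (k - ℓ) + ℓ - 1)) ^ ((t : ℝ)⁻¹), by positivity,
      Real.rpow_inv_natCast_pow (by positivity) ht⟩
  have hle : (n : ℝ) ^ (k - ℓ) ≤ r := by
    refine le_of_pow_le_pow_left₀ ht hr.le ?_
    rw [hrt, ← pow_mul, mul_comm (k - ℓ)]
    exact pow_le_pow_right₀ hn' (by have := h.one_le; omega)
  refine ⟨θ / r, by positivity, ?_, ?_⟩
  · rw [div_pow, hrt, div_mul_cancel₀ _ (by positivity)]
  · rw [mul_div_assoc', div_le_iff₀ hr, mul_comm]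
    gcongr

lemma exists_rate_le_gProb_exists_isLinkerPacking (h : IsConnectorSize k ℓ t N) (hη : 0 < η)
    (hη₁ : η ≤ 1) {c : ℝ} (hc : 0 < c) :
    ∃ κ : ℝ, 0 < κ ∧ κ ≤ 1 ∧ ∀ {n m : ℕ} {H : Finset (Finset (Fin n))} {W : Finset (Fin n)} {p : ℝ},
      1 ≤ n → HasDegreeGap k ℓ η H → p ∈ Set.Icc 0 1 →
      c ≤ p ^ t * (n : ℝ) ^ (t * (k - ℓ) + ℓ - 1) →
      ((#W + N * m + (2 * ℓ + N) + t * k : ℕ) : ℝ) ≤ 2 / 3 * η * n → ∀ T : ℕ,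
      1 - 2 ^ T * ((1 - κ) ^ m * (n : ℝ) ^ (2 * ℓ)) ≤
        gProb n k p fun E => ∃ D, h.IsLinkerPacking η H m T W E D := by
  have ht : t ≠ 0 := Nat.one_le_iff_ne_zero.1 h.one_le_length
  have hN : N ≠ 0 := by have := h.add_eq; have := h.le_mul; have := h.one_le; omega
  obtain ⟨θ, hθ₀, hθ₁, hθc, hθt⟩ :
      ∃ θ : ℝ, 0 < θ ∧ θ ≤ 1 ∧ θ ≤ c ∧ 2 ^ t * θ ≤ 1 / 2 := by
    refine ⟨min ((1 / 2) ^ (t + 1)) c, by positivity, (min_le_left _ _).trans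
      (pow_le_one₀ (by norm_num) (by norm_num)), min_le_right _ _, ?_⟩
    calc 2 ^ t * min ((1 / 2) ^ (t + 1)) c ≤ 2 ^ t * (1 / 2 : ℝ) ^ (t + 1) := by
          gcongr
          exact min_le_left _ _
      _ = 1 / 2 := by rw [pow_succ, ← mul_assoc, ← mul_pow]; norm_num
  set x := θ ^ t * ((η / 3) ^ (2 * t) * (1 / 3) ^ (t * (k - ℓ) - ℓ))
  have hx₁ : x ≤ 1 := mul_le_one₀ (pow_le_one₀ hθ₀.le hθ₁) (by positivity)
    (mul_le_one₀ (pow_le_one₀ (by positivity) (by linarith)) (by positivity)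
      (pow_le_one₀ (by norm_num) (by norm_num)))
  have hN₁ : 1 ≤ 4 * (N : ℝ) ^ N := by exact_mod_cast Nat.mul_pos (by norm_num) (by positivity)
  have hκ₁ : x / (4 * (N : ℝ) ^ N) ≤ 1 := (div_le_one (by positivity)).2 (hx₁.trans hN₁)
  refine ⟨x / (4 * (N : ℝ) ^ N), by positivity, hκ₁, fun {n m H W p} hn hH hp hcp hW T => ?_⟩
  obtain ⟨p', hp', hpath, hedge⟩ := h.exists_edgeProb hn hθ₀.le
  have hp'p : p' ≤ p := by
    refine le_of_pow_le_pow_left₀ ht hp.1 (le_of_mul_le_mul_right ?_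
      (by positivity : (0 : ℝ) < (n : ℝ) ^ (t * (k - ℓ) + ℓ - 1)))
    exact hpath.trans_le ((pow_le_of_le_one hθ₀.le hθ₁ ht).trans (hθc.trans hcp))
  exact (h.le_gProb_exists_isLinkerPacking hn hH ⟨hη.le, hη₁⟩ ⟨hp', hp'p.trans hp.2⟩
    ⟨hθ₀.le, hθ₁⟩ hθt hpath hedge hκ₁ (mul_div_cancel₀ _ (by positivity)) hW T).trans
    (gProb_mono_prob hp' hp'p hp.2 (h.monotone_exists_isLinkerPacking η H m T W))

end IsConnectorSize

lemma two_pow_ceil_mul_one_sub_pow_floor_le_exp {x y : ℝ} (hκ : κ ≤ 1) (hκ₀ : 0 ≤ κ) (hx : 0 ≤ x) :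
    (2 : ℝ) ^ ⌈x⌉₊ * (1 - κ) ^ ⌊y⌋₊ ≤ Real.exp (x + 1 - κ * (y - 1)) := by
  have hceil : (2 : ℝ) ^ ⌈x⌉₊ ≤ Real.exp (x + 1) :=
    calc (2 : ℝ) ^ ⌈x⌉₊ ≤ Real.exp 1 ^ ⌈x⌉₊ := by
          gcongr
          linarith [Real.add_one_le_exp (1 : ℝ)]
      _ = Real.exp ⌈x⌉₊ := by rw [← Real.exp_nat_mul, mul_one]
      _ ≤ Real.exp (x + 1) := Real.exp_le_exp.2 (Nat.ceil_lt_add_one hx).le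
  have hfloor : (1 - κ) ^ ⌊y⌋₊ ≤ Real.exp (-(κ * (y - 1))) :=
    calc (1 - κ) ^ ⌊y⌋₊ ≤ Real.exp (-κ) ^ ⌊y⌋₊ :=
          pow_le_pow_left₀ (sub_nonneg.2 hκ) (Real.one_sub_le_exp_neg κ) _
      _ = Real.exp (-(κ * ⌊y⌋₊)) := by rw [← Real.exp_nat_mul, mul_neg, mul_comm]
      _ ≤ Real.exp (-(κ * (y - 1))) := by
          gcongr
          exact (Nat.sub_one_lt_floor y).le
  calc _ ≤ Real.exp (x + 1) * Real.exp (-(κ * (y - 1))) :=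
        mul_le_mul hceil hfloor (pow_nonneg (sub_nonneg.2 hκ) _) (Real.exp_nonneg _)
    _ = _ := by rw [← Real.exp_add, ← sub_eq_add_neg]

open Filter Topology in
lemma tendsto_pow_ceil_mul_pow_floor (s : ℕ) (hκ₀ : 0 < κ) (hκ₁ : κ ≤ 1) (hβ : 0 < β)
    (hβ₁ : β ≤ 1) (hβκ : β ≤ κ / 6) :
    Tendsto (fun n : ℕ => (2 : ℝ) ^ ⌈3 * β ^ 3 * (n : ℝ)⌉₊ *
      ((1 - κ) ^ ⌊β * (n : ℝ)⌋₊ * (n : ℝ) ^ s)) atTop (𝓝 0) := by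
  have hdecay : Tendsto (fun n : ℕ => Real.exp 2 * ((n : ℝ) ^ s * Real.exp (-(κ * β / 2) * n)))
      atTop (𝓝 0) := by
    have := (tendsto_rpow_mul_exp_neg_mul_atTop_nhds_zero (s : ℝ) (κ * β / 2)
      (by positivity)).comp (tendsto_natCast_atTop_atTop (R := ℝ))
    simpa [Function.comp_def] using this.const_mul (Real.exp 2)
  have hrate : 3 * β ^ 3 ≤ κ * β / 2 := by
    have : β ^ 2 ≤ κ / 6 := by nlinarith
    nlinarith
  refine squeeze_zero (fun n => ?_) (fun n => ?_) hdecay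
  · have : 0 ≤ 1 - κ := sub_nonneg.2 hκ₁
    positivity
  calc _ = 2 ^ ⌈3 * β ^ 3 * (n : ℝ)⌉₊ * (1 - κ) ^ ⌊β * (n : ℝ)⌋₊ * (n : ℝ) ^ s :=
        (mul_assoc _ _ _).symm
    _ ≤ Real.exp (2 + -(κ * β / 2) * n) * (n : ℝ) ^ s := by
        gcongr
        refine (two_pow_ceil_mul_one_sub_pow_floor_le_exp hκ₁ hκ₀.le (by positivity)).trans
          (Real.exp_le_exp.2 ?_)
        nlinarith [mul_le_mul_of_nonneg_right hrate (Nat.cast_nonneg (α := ℝ) n)]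
    _ = _ := by rw [Real.exp_add]; ring

theorem connecting_lemma_general (h : IsConnectorSize k ℓ t N) (hη : 0 < η) (hη₁ : η ≤ 1)
    {c : ℝ} (hc : 0 < c) :
    ∃ β₀ : ℝ, 0 < β₀ ∧ ∀ β : ℝ, 0 < β → β ≤ β₀ → ∀ δ : ℝ, 0 < δ → ∃ n₀ : ℕ, ∀ n : ℕ, n₀ ≤ n →
      ∀ H : Finset (Finset (Fin n)), HasDegreeGap k ℓ η H →
      ∀ p : ℝ, p ∈ Set.Icc 0 1 → c ≤ p ^ t * (n : ℝ) ^ (t * (k - ℓ) + ℓ - 1) →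
      ∀ W : Finset (Fin n), (#W : ℝ) ≤ η * n / 3 →
        1 - δ ≤ gProb n k p fun E =>
          ∃ 𝒞 : Finset (Fin N → Fin n), IsConnectingFamily k ℓ t β η H E W 𝒞 := by
  obtain ⟨κ, hκ₀, hκ₁, hrate⟩ := h.exists_rate_le_gProb_exists_isLinkerPacking hη hη₁ hc
  have hN : (0 : ℝ) < N := by
    have := h.add_eq; have := h.le_mul; have := h.one_le
    exact_mod_cast (by omega : 0 < N)
  refine ⟨min 1 (min (κ / 6) (η / (6 * N))), by positivity, fun β hβ hβ₀ δ hδ => ?_⟩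
  obtain ⟨hβ₁, hβκ, hβη⟩ : β ≤ 1 ∧ β ≤ κ / 6 ∧ β ≤ η / (6 * N) := by simpa using hβ₀
  have hlarge := tendsto_natCast_atTop_atTop (R := ℝ) |>.eventually_ge_atTop
    ((2 * ℓ + N + t * k : ℝ) / (η / 6))
  obtain ⟨n₀, hn₀⟩ := Filter.eventually_atTop.1 (((Filter.eventually_ge_atTop 1).and hlarge).and
    ((tendsto_pow_ceil_mul_pow_floor (2 * ℓ) hκ₀ hκ₁ hβ hβ₁ hβκ).eventually_le_const hδ))
  refine ⟨n₀, fun n hn H hH p hp hcp W hW => ?_⟩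
  obtain ⟨⟨hn₁, hconst⟩, hsmall⟩ := hn₀ n hn
  have hroom : ((#W + N * ⌊β * (n : ℝ)⌋₊ + (2 * ℓ + N) + t * k : ℕ) : ℝ) ≤ 2 / 3 * η * n := by
    have hfloor : (N : ℝ) * ⌊β * (n : ℝ)⌋₊ ≤ η / 6 * n :=
      calc (N : ℝ) * ⌊β * (n : ℝ)⌋₊ ≤ N * (η / (6 * N) * n) := by
            gcongr
            exact (Nat.floor_le (by positivity)).trans (by gcongr)
        _ = η / 6 * n := by field_simp
    rw [div_le_iff₀ (by positivity)] at hconst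
    push_cast
    linarith
  calc 1 - δ ≤ 1 - 2 ^ ⌈3 * β ^ 3 * (n : ℝ)⌉₊ *
          ((1 - κ) ^ ⌊β * (n : ℝ)⌋₊ * (n : ℝ) ^ (2 * ℓ)) := sub_le_sub_left hsmall 1
    _ ≤ _ := hrate hn₁ hH hp hcp hroom _
    _ ≤ _ := gProb_mono hp fun E ⟨D, hD⟩ => ⟨D, h.isConnectingFamily_of_isLinkerPacking hβ.le hD⟩

lemma isConnectorSize_natCeil (hl : 1 ≤ ℓ) (hlk : ℓ < k) :
    IsConnectorSize k ℓ ⌈(ℓ : ℚ) / ((k : ℚ) - (ℓ : ℚ))⌉₊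
      (3 * ⌈(ℓ : ℚ) / ((k : ℚ) - (ℓ : ℚ))⌉₊ * (k - ℓ) - ℓ) := by
  have hd : (0 : ℚ) < (k - ℓ : ℕ) := by exact_mod_cast Nat.sub_pos_of_lt hlk
  rw [← Nat.cast_sub hlk.le]
  set t := ⌈(ℓ : ℚ) / (k - ℓ : ℕ)⌉₊
  have hle : ℓ ≤ t * (k - ℓ) := by
    have := (div_le_iff₀ hd).1 (Nat.le_ceil ((ℓ : ℚ) / (k - ℓ : ℕ)))
    exact_mod_cast this
  have hlt : t * (k - ℓ) < k := by
    have hceil : (t : ℚ) < ℓ / (k - ℓ : ℕ) + 1 := Nat.ceil_lt_add_one (by positivity)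
    have hsum : (ℓ : ℚ) + (k - ℓ : ℕ) = k := by exact_mod_cast Nat.add_sub_cancel' hlk.le
    rw [div_add_one hd.ne', lt_div_iff₀ hd, hsum] at hceil
    exact_mod_cast hceil
  exact ⟨hl, hlk, hle, hlt, by rw [mul_assoc]; omega⟩

lemma IsConnectorSize.one_le_pow_mul_pow (h : IsConnectorSize k ℓ t N) {C ε : ℝ} (hn : 1 ≤ n)
    (hC : 1 ≤ C) (hε : ε ≤ (ℓ : ℝ) / (3 * (t : ℝ)))
    (hpε : 2 ≤ ℓ → (n : ℝ) ^ (-((k : ℝ) - (ℓ : ℝ)) - ε) ≤ p)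
    (hpC : ℓ = 1 → C * (n : ℝ) ^ (-((k : ℝ) - 1)) ≤ p) :
    1 ≤ p ^ t * (n : ℝ) ^ (t * (k - ℓ) + ℓ - 1) := by
  have hn' : (1 : ℝ) ≤ n := by exact_mod_cast hn
  have ht : (1 : ℝ) ≤ t := by exact_mod_cast h.one_le_length
  have hcast : ((k - ℓ : ℕ) : ℝ) = (k : ℝ) - ℓ := Nat.cast_sub h.lt.le
  obtain hl | hl := h.one_le.eq_or_lt
  · subst hl
    have hk : (n : ℝ) ^ (-((k : ℝ) - 1)) * (n : ℝ) ^ (k - 1) = 1 := by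
      rw [← Real.rpow_natCast, ← Real.rpow_add (by positivity), hcast, Nat.cast_one, neg_add_cancel,
        Real.rpow_zero]
    obtain rfl : t = 1 := by
      have := h.mul_lt; have := h.lt; have := h.one_le_length
      by_contra hne
      have := Nat.mul_le_mul_right (k - 1) (by omega : 2 ≤ t)
      omega
    calc (1 : ℝ) ≤ C := hC
      _ = C * (n : ℝ) ^ (-((k : ℝ) - 1)) * (n : ℝ) ^ (k - 1) := by rw [mul_assoc, hk, mul_one]
      _ ≤ p * (n : ℝ) ^ (k - 1) := by
          gcongr
          exact hpC rfl
      _ = _ := by rw [pow_one, one_mul, Nat.add_sub_cancel]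
  · have hl' : (2 : ℝ) ≤ ℓ := by exact_mod_cast hl
    have hexp : ((t * (k - ℓ) + ℓ - 1 : ℕ) : ℝ) = t * ((k : ℝ) - ℓ) + ℓ - 1 := by
      rw [Nat.cast_sub (by omega)]
      push_cast [hcast]
      ring
    have hεt : ε * t ≤ ℓ / 3 := by
      rw [le_div_iff₀ (by positivity)] at hε
      linarith
    calc (1 : ℝ) ≤ (n : ℝ) ^ ((-((k : ℝ) - ℓ) - ε) * t + (t * ((k : ℝ) - ℓ) + ℓ - 1)) :=
          Real.one_le_rpow hn' (by linarith)
      _ = ((n : ℝ) ^ (-((k : ℝ) - ℓ) - ε)) ^ t * (n : ℝ) ^ (t * (k - ℓ) + ℓ - 1) := by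
          rw [Real.rpow_add (by positivity), Real.rpow_mul_natCast (by positivity), ← hexp,
            Real.rpow_natCast]
      _ ≤ _ := by
          gcongr
          exact hpε hl

end Connecting

/-- Lemma 3.3, the connecting lemma. -/
theorem connecting_lemma
    (k ℓ : ℕ) (hl1 : 1 ≤ ℓ) (hlk : ℓ < k)
    (t1 t3 : ℕ) (ht1 : t1 = ⌈(ℓ : ℚ) / ((k : ℚ) - (ℓ : ℚ))⌉₊)
    (ht3 : t3 = 3 * t1 * (k - ℓ) - ℓ) :
    ∃ η₀ : ℝ, 0 < η₀ ∧ ∀ η : ℝ, 0 < η → η ≤ η₀ →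
    ∃ β₀ : ℝ, 0 < β₀ ∧ ∀ β : ℝ, 0 < β → β ≤ β₀ →
    ∃ C₀ : ℕ, ∀ C : ℕ, C₀ ≤ C →
    ∀ ε : ℝ, 0 < ε → ε ≤ (ℓ : ℝ) / (3 * (t1 : ℝ)) →
    ∀ δ : ℝ, 0 < δ → ∃ n₀ : ℕ, ∀ n : ℕ, n₀ ≤ n →
    ∀ H' : Finset (Finset (Fin n)), H' ⊆ kSets n k →
      (∀ S : Finset (Fin n), S.card = ℓ →
        degOf H' S = 0 ∨ η * (n : ℝ) ^ (k - ℓ) ≤ (degOf H' S : ℝ)) →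
    ∀ p : ℝ, 0 ≤ p → p ≤ 1 →
      ((2 ≤ ℓ → (n : ℝ) ^ (-((k : ℝ) - (ℓ : ℝ)) - ε) ≤ p) ∧
       (ℓ = 1 → (C : ℝ) * (n : ℝ) ^ (-((k : ℝ) - 1)) ≤ p)) →
    ∀ W : Finset (Fin n), (W.card : ℝ) ≤ η * (n : ℝ) / 3 →
      1 - δ ≤ gProb n k p (fun E =>
        ∃ 𝒞 : Finset (Fin t3 → Fin n),
          (∀ c ∈ 𝒞, Function.Injective c) ∧
          (∀ c ∈ 𝒞, ∀ c' ∈ 𝒞, c ≠ c' → ∀ m m', c m ≠ c' m') ∧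
          (∀ c ∈ 𝒞, ∀ m, c m ∉ W) ∧
          (𝒞.card : ℝ) ≤ β * (n : ℝ) ∧
          ∀ A B : Fin ℓ → Fin n, Function.Injective A → Function.Injective B →
            (∀ m m', A m ≠ B m') →
            η * (n : ℝ) ^ (k - ℓ) ≤ (degOf H' (Finset.image A Finset.univ) : ℝ) →
            η * (n : ℝ) ^ (k - ℓ) ≤ (degOf H' (Finset.image B Finset.univ) : ℝ) →
            3 * β ^ 3 * (n : ℝ) ≤
              ((𝒞.filter (fun c =>
                SpansPath k ℓ (3 * t1) (H' ∪ E) (concat3 A c B))).card : ℝ)) := by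
  subst ht1 ht3
  have h := isConnectorSize_natCeil hl1 hlk
  refine ⟨1, one_pos, fun η hη hη₁ => ?_⟩
  obtain ⟨β₀, hβ₀, hmain⟩ := connecting_lemma_general h hη hη₁ one_pos
  refine ⟨β₀, hβ₀, fun β hβ hββ₀ => ⟨1, fun C hC ε _ hε δ hδ => ?_⟩⟩
  obtain ⟨n₀, hn₀⟩ := hmain β hβ hββ₀ δ hδ
  refine ⟨max 1 n₀, fun n hn H' hH hgap p hp hp₁ hprob W hW => ?_⟩
  exact hn₀ n (le_of_max_le_right hn) H' ⟨hH, hgap⟩ p ⟨hp, hp₁⟩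
    (h.one_le_pow_mul_pow (le_of_max_le_left hn) (mod_cast hC) hε hprob.1 hprob.2) W hW
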